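/- arXiv:2103.00671 — 4 statements merged into one kernel-verified Lean document; each statement's English description precedes it below -/
import Mathlib

section
/- For every n ≥ 2, the class H_n = { x ↦ 1[⟨w,x⟩ + b ≥ 0] : w ∈ ℝⁿ, b ∈ ℝ } of linear classifiers on ℝⁿ is not robust learnable: there exist ε, δ ∈ (0,1) such that for every m ∈ ℕ and every (possibly randomized) learning algorithm A, there exist a target h* ∈ H_n and a distribution D over D_{h*} with P_{S_trn~D^m}( atk_D(h*, S_trn, A) > ε ) > δ. -/
open MeasureTheory ENNReal RealInnerProductSpace

/-- The multiset of training examples determined by a tuple of i.i.d. draws. -/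
def toTrain {α : Type*} {m : ℕ} (f : Fin m → α) : Multiset α := ↑(List.ofFn f)

/-- The distribution of `m` i.i.d. draws from `D`. -/
noncomputable def samples {α : Type*} [MeasurableSpace α] (D : Measure α) (m : ℕ) :
    Measure (Fin m → α) := Measure.pi fun _ => D

/-- The clean-label attackable rate of a randomized learner `a` with seed distribution `μ`. -/
noncomputable def atkRand {X : Type*} [MeasurableSpace X] {Ω : Type*} [MeasurableSpace Ω]
    (D : Measure (X × Bool)) (μ : Measure Ω) (h : X → Bool)
    (S : Multiset (X × Bool)) (a : Multiset (X × Bool) → Ω → X → Bool) : ℝ≥0∞ :=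
  ⨆ Adv : {f : X → Multiset (X × Bool) // ∀ x : X, ∀ p ∈ f x, p.2 = h p.1},
    (D.prod μ) {q : (X × Bool) × Ω | a (S + Adv.1 q.1.1) q.2 q.1.1 ≠ h q.1.1}

/-- flip one coordinate -/
def flipAt {N : ℕ} (e : Fin N → Bool) (k : Fin N) : Fin N → Bool :=
  Function.update e k (!(e k))

lemma flipAt_self {N : ℕ} (e : Fin N → Bool) (k : Fin N) : flipAt e k k = !(e k) := by
  simp [flipAt]

lemma flipAt_flipAt {N : ℕ} (e : Fin N → Bool) (k : Fin N) : flipAt (flipAt e k) k = e := by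
  simp [flipAt]

/-- the uniform measure on `Fin N` -/
noncomputable def unif (N : ℕ) : Measure (Fin N) := (N : ℝ≥0∞)⁻¹ • Measure.count

lemma unif_prob {N : ℕ} (hN : 0 < N) : IsProbabilityMeasure (unif N) := by
  constructor
  simp only [unif, Measure.smul_apply, smul_eq_mul, Measure.count_univ]
  rw [show ENat.card (Fin N) = (N : ℕ∞) by simp]
  exact ENNReal.inv_mul_cancel (by simpa using hN.ne') (by simp)

/-- the involution on vertices -/
def tau {N : ℕ} (k : Fin N) (v : (Fin N → Bool) × Bool) : (Fin N → Bool) × Bool :=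
  (flipAt v.1 k, !v.2)

lemma tau_tau {N : ℕ} (k : Fin N) (v : (Fin N → Bool) × Bool) : tau k (tau k v) = v := by
  simp [tau, flipAt_flipAt]

/-- training multiset -/
def trn {X : Type*} {N m : ℕ} (x : (Fin N → Bool) × Bool → Fin N → X)
    (v : (Fin N → Bool) × Bool) (κ : Fin m → Fin N) : Multiset (X × Bool) :=
  toTrain (fun i => (x v (κ i), v.2))

lemma mem_trn {X : Type*} {N m : ℕ} {x : (Fin N → Bool) × Bool → Fin N → X}
    {v : (Fin N → Bool) × Bool} {κ : Fin m → Fin N} {p : X × Bool}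
    (hp : p ∈ trn x v κ) : ∃ i, p = (x v (κ i), v.2) := by
  simp only [trn, toTrain, Multiset.mem_coe, List.mem_ofFn] at hp
  obtain ⟨i, hi⟩ := hp
  exact ⟨i, hi.symm⟩

/-- error of the learner on the swap attack -/
noncomputable def errv {X : Type*} {Ω : Type*} [MeasurableSpace Ω] (μ : Measure Ω)
    (a : Multiset (X × Bool) → Ω → X → Bool) {N m : ℕ}
    (x : (Fin N → Bool) × Bool → Fin N → X) (κ : Fin m → Fin N) (k : Fin N)
    (v : (Fin N → Bool) × Bool) : ℝ≥0∞ :=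
  μ {ω | a (trn x v κ + trn x (tau k v) κ) ω (x v k) ≠ v.2}

lemma prod_lower {X : Type*} [MeasurableSpace X] {Ω : Type*}
    [MeasurableSpace Ω] (μ : Measure Ω) [SFinite μ] {N : ℕ} (z : Fin N → X)
    (Q : Set (X × Ω)) :
    (N : ℝ≥0∞)⁻¹ * ∑ k, μ {ω | (z k, ω) ∈ Q} ≤ ((unif N).map z).prod μ Q := by
  have hz : Measurable z := measurable_of_finite z
  rw [← measure_toMeasurable Q]
  rw [Measure.prod_apply (measurableSet_toMeasurable _ _),
    lintegral_map (measurable_measure_prodMk_left (measurableSet_toMeasurable _ _)) hz, unif,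
    lintegral_smul_measure, lintegral_count, tsum_fintype, smul_eq_mul]
  gcongr with k
  intro ω hω
  exact subset_toMeasurable _ _ hω

lemma atk_lower {X : Type*} [MeasurableSpace X] {Ω : Type*}
    [MeasurableSpace Ω] (μ : Measure Ω) [SFinite μ]
    (a : Multiset (X × Bool) → Ω → X → Bool) {N m : ℕ}
    (x : (Fin N → Bool) × Bool → Fin N → X) (h : (Fin N → Bool) → X → Bool)
    (H1 : ∀ v k, h v.1 (x v k) = v.2)
    (H3 : ∀ v k, v.1 k = !v.2 → ∀ j, j ≠ k → h v.1 (x (tau k v) j) = !v.2)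
    (hinj : ∀ v, Function.Injective (x v))
    (v : (Fin N → Bool) × Bool) (κ : Fin m → Fin N) :
    (N : ℝ≥0∞)⁻¹ * ∑ k, (if v.1 k = (!v.2) ∧ k ∉ Set.range κ then errv μ a x κ k v else 0) ≤
      atkRand ((unif N).map (fun k => (x v k, v.2))) μ (h v.1) (trn x v κ) a := by
  classical
  let f : X → Multiset (X × Bool) := fun y =>
    if H : ∃ k, y = x v k ∧ v.1 k = (!v.2) ∧ k ∉ Set.range κ
      then trn x (tau H.choose v) κ else 0
  have hf : ∀ y : X, ∀ p ∈ f y, p.2 = h v.1 p.1 := by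
    intro y p hp
    by_cases H : ∃ k, y = x v k ∧ v.1 k = (!v.2) ∧ k ∉ Set.range κ
    · simp only [f, dif_pos H] at hp
      obtain ⟨i, rfl⟩ := mem_trn hp
      have := H.choose_spec
      rw [H3 v _ this.2.1]
      · rfl
      · intro hh
        exact this.2.2 ⟨i, hh⟩
    · simp only [f, dif_neg H] at hp
      exact absurd hp (Multiset.notMem_zero p)
  have hfk : ∀ k, v.1 k = (!v.2) ∧ k ∉ Set.range κ → f (x v k) = trn x (tau k v) κ := by
    intro k hk
    have H : ∃ k', x v k = x v k' ∧ v.1 k' = (!v.2) ∧ k' ∉ Set.range κ := ⟨k, rfl, hk⟩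
    simp only [f, dif_pos H]
    rw [← hinj v H.choose_spec.1]
  unfold atkRand
  refine le_trans ?_ (le_iSup _ ⟨f, hf⟩)
  refine le_trans ?_ (prod_lower μ _ _)
  gcongr with k
  split_ifs with hk
  · simp only [errv, Set.mem_ofPred_eq, hfk k hk, H1]
    exact le_rfl
  · exact zero_le

lemma err_pair {X : Type*} {Ω : Type*}
    [MeasurableSpace Ω] (μ : Measure Ω) [IsProbabilityMeasure μ]
    (a : Multiset (X × Bool) → Ω → X → Bool) {N m : ℕ}
    (x : (Fin N → Bool) × Bool → Fin N → X)
    (κ : Fin m → Fin N) (k : Fin N) (v : (Fin N → Bool) × Bool)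
    (H2 : x (tau k v) k = x v k) :
    1 ≤ errv μ a x κ k v + errv μ a x κ k (tau k v) := by
  unfold errv
  rw [tau_tau, H2, add_comm (trn x (tau k v) κ)]
  refine le_trans ?_ (measure_union_le _ _)
  rw [← measure_univ (μ := μ)]
  apply measure_mono
  intro ω _
  simp only [tau, Set.mem_union, Set.mem_ofPred_eq]
  generalize a _ ω _ = c
  cases c <;> cases v.2 <;> simp

lemma sum_cond {N : ℕ} (k : Fin N) :
    ∑ v : (Fin N → Bool) × Bool, (if v.1 k = (!v.2) then (1 : ℝ≥0∞) else 0) = 2 ^ N := by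
  rw [Fintype.sum_prod_type]
  have : ∀ e : Fin N → Bool, ∑ b : Bool, (if e k = (!b) then (1 : ℝ≥0∞) else 0) = 1 := by
    intro e
    cases h : e k <;> simp [h]
  rw [Finset.sum_congr rfl fun e _ => this e]
  simp

lemma sum_err {X : Type*} {Ω : Type*}
    [MeasurableSpace Ω] (μ : Measure Ω) [IsProbabilityMeasure μ]
    (a : Multiset (X × Bool) → Ω → X → Bool) {N m : ℕ}
    (x : (Fin N → Bool) × Bool → Fin N → X)
    (H2 : ∀ v k, v.1 k = (!v.2) → x (tau k v) k = x v k)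
    (κ : Fin m → Fin N) (k : Fin N) :
    2 ^ N ≤ 2 * ∑ v, (if v.1 k = (!v.2) then errv μ a x κ k v else 0) := by
  let T : Equiv.Perm ((Fin N → Bool) × Bool) := ⟨tau k, tau k, tau_tau k, tau_tau k⟩
  have hT := Equiv.sum_comp T (fun v => if v.1 k = (!v.2) then errv μ a x κ k v else 0)
  rw [two_mul]
  nth_rewrite 2 [← hT]
  rw [← Finset.sum_add_distrib, ← sum_cond k]
  apply Finset.sum_le_sum
  intro v _
  by_cases hv : v.1 k = (!v.2)
  · have h2 : (T v).1 k = (!(T v).2) := by simp [T, tau, flipAt_self, hv]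
    rw [if_pos hv, if_pos hv, if_pos h2]
    exact err_pair μ a x κ k v (H2 v k hv)
  · rw [if_neg hv]; exact zero_le

lemma count_compl {N m : ℕ} (κ : Fin m → Fin N) [DecidablePred (fun k => k ∉ Set.range κ)] :
    N ≤ m + (Finset.univ.filter (fun k => k ∉ Set.range κ)).card := by
  classical
  have h1 : (Finset.univ.image κ).card ≤ m := by
    simpa using Finset.card_image_le (s := Finset.univ) (f := κ)
  have h2 : (Finset.univ.image κ)ᶜ = Finset.univ.filter (fun k => k ∉ Set.range κ) := by
    ext k; simp
  have h3 := Finset.card_add_card_compl (Finset.univ.image κ)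
  rw [h2] at h3
  simp only [Fintype.card_fin] at h3
  omega

lemma sum_atk {X : Type*} [MeasurableSpace X] {Ω : Type*}
    [MeasurableSpace Ω] (μ : Measure Ω) [IsProbabilityMeasure μ]
    (a : Multiset (X × Bool) → Ω → X → Bool) {N m : ℕ} (hN : N = 2 * m + 2)
    (x : (Fin N → Bool) × Bool → Fin N → X) (h : (Fin N → Bool) → X → Bool)
    (H1 : ∀ v k, h v.1 (x v k) = v.2)
    (H2 : ∀ v k, v.1 k = (!v.2) → x (tau k v) k = x v k)
    (H3 : ∀ v k, v.1 k = !v.2 → ∀ j, j ≠ k → h v.1 (x (tau k v) j) = !v.2)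
    (hinj : ∀ v, Function.Injective (x v)) (κ : Fin m → Fin N) :
    2 ^ N ≤ 4 * ∑ v, atkRand ((unif N).map (fun k => (x v k, v.2))) μ (h v.1) (trn x v κ) a := by
  classical
  set R := Finset.univ.filter (fun k => k ∉ Set.range κ) with hR
  have hc : N ≤ 2 * R.card := by
    have : N ≤ m + R.card := count_compl κ
    omega
  have hN0 : (N : ℝ≥0∞) ≠ 0 := by simp [hN]
  have key : (R.card : ℝ≥0∞) * 2 ^ N ≤ 2 * ∑ v : (Fin N → Bool) × Bool, ∑ k,
      (if v.1 k = (!v.2) ∧ k ∉ Set.range κ then errv μ a x κ k v else 0) := by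
    rw [Finset.sum_comm, Finset.mul_sum]
    calc (R.card : ℝ≥0∞) * 2 ^ N = ∑ k ∈ R, 2 ^ N := by simp
      _ = ∑ k, if k ∉ Set.range κ then (2 : ℝ≥0∞) ^ N else 0 := by
          rw [hR, Finset.sum_filter]
      _ ≤ _ := by
          apply Finset.sum_le_sum
          intro k _
          by_cases hk : k ∉ Set.range κ
          · rw [if_pos hk]
            refine (sum_err μ a x H2 κ k).trans_eq ?_
            simp only [hk, not_false_eq_true, and_true]
          · rw [if_neg hk]
            exact zero_le
  have h2 : ∑ v, (N : ℝ≥0∞)⁻¹ * ∑ k,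
      (if v.1 k = (!v.2) ∧ k ∉ Set.range κ then errv μ a x κ k v else 0) ≤
      ∑ v, atkRand ((unif N).map (fun k => (x v k, v.2))) μ (h v.1) (trn x v κ) a :=
    Finset.sum_le_sum fun v _ => atk_lower μ a x h H1 H3 hinj v κ
  rw [← Finset.mul_sum] at h2
  refine le_trans ?_ (mul_le_mul_right h2 4)
  have hc' : (N : ℝ≥0∞) ≤ 2 * R.card := by exact_mod_cast hc
  generalize (∑ v : (Fin N → Bool) × Bool, ∑ k,
      (if v.1 k = (!v.2) ∧ k ∉ Set.range κ then errv μ a x κ k v else 0)) = Z at key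
  calc (2 : ℝ≥0∞) ^ N = (N : ℝ≥0∞)⁻¹ * (N * 2 ^ N) := by
        rw [← mul_assoc, ENNReal.inv_mul_cancel hN0 (by simp), one_mul]
    _ ≤ (N : ℝ≥0∞)⁻¹ * (2 * R.card * 2 ^ N) := by gcongr
    _ ≤ (N : ℝ≥0∞)⁻¹ * (2 * (2 * Z)) := by rw [mul_assoc 2]; gcongr
    _ = 4 * ((N : ℝ≥0∞)⁻¹ * Z) := by ring

lemma atk_le_one {X : Type*} [MeasurableSpace X] {Ω : Type*}
    [MeasurableSpace Ω] (μ : Measure Ω) [IsProbabilityMeasure μ] (D : Measure (X × Bool))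
    [IsProbabilityMeasure D] (h : X → Bool) (S : Multiset (X × Bool))
    (a : Multiset (X × Bool) → Ω → X → Bool) : atkRand D μ h S a ≤ 1 :=
  iSup_le fun _ => prob_le_one

lemma core {X : Type*} [MeasurableSpace X] {Ω : Type*}
    [MeasurableSpace Ω] (μ : Measure Ω) [IsProbabilityMeasure μ]
    (a : Multiset (X × Bool) → Ω → X → Bool) {N m : ℕ} (hN : N = 2 * m + 2)
    (x : (Fin N → Bool) × Bool → Fin N → X) (h : (Fin N → Bool) → X → Bool)
    (H1 : ∀ v k, h v.1 (x v k) = v.2)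
    (H2 : ∀ v k, v.1 k = (!v.2) → x (tau k v) k = x v k)
    (H3 : ∀ v k, v.1 k = !v.2 → ∀ j, j ≠ k → h v.1 (x (tau k v) j) = !v.2)
    (hinj : ∀ v, Function.Injective (x v)) :
    ∃ (e : Fin N → Bool) (D : Measure (X × Bool)), IsProbabilityMeasure D ∧
      D {p | p.2 = h e p.1} = 1 ∧
      ENNReal.ofReal (1 / 32) < samples D m {f | ENNReal.ofReal (1 / 16) <
        atkRand D μ (h e) (toTrain f) a} := by
  have hU : IsProbabilityMeasure (unif N) := unif_prob (by omega)
  have hm : ∀ v, Measurable (fun k => (x v k, v.2)) := fun v => measurable_of_finite _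
  have hD : ∀ v, IsProbabilityMeasure ((unif N).map (fun k => (x v k, v.2))) :=
    fun v => Measure.isProbabilityMeasure_map (hm v).aemeasurable
  let V : Measure (Fin m → Fin N) := Measure.pi fun _ => unif N
  have hV : IsProbabilityMeasure V := by unfold V; infer_instance
  let G : (Fin N → Bool) × Bool → (Fin m → Fin N) → ℝ≥0∞ := fun v κ =>
    atkRand ((unif N).map (fun k => (x v k, v.2))) μ (h v.1) (trn x v κ) a
  have hG : ∀ v, Measurable (G v) := fun v => measurable_of_finite _
  have hsum : (2 : ℝ≥0∞) ^ N ≤ 4 * ∑ v, ∫⁻ κ, G v κ ∂V := by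
    rw [← lintegral_finsetSum _ (fun v _ => hG v), ← lintegral_const_mul _
      (Finset.measurable_fun_sum _ fun v _ => hG v)]
    calc (2 : ℝ≥0∞) ^ N = ∫⁻ κ, 2 ^ N ∂V := by simp
      _ ≤ _ := lintegral_mono fun κ => sum_atk μ a hN x h H1 H2 H3 hinj κ
  obtain ⟨v, hv⟩ : ∃ v, ENNReal.ofReal (1 / 8) ≤ ∫⁻ κ, G v κ ∂V := by
    by_contra! hcon
    have hlt : ∑ v, ∫⁻ κ, G v κ ∂V <
        ∑ v : (Fin N → Bool) × Bool, ENNReal.ofReal (1 / 8) :=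
      ENNReal.sum_lt_sum_of_nonempty Finset.univ_nonempty fun v _ => hcon v
    have h4 : (4 : ℝ≥0∞) * ∑ v, ∫⁻ κ, G v κ ∂V <
        4 * ∑ v : (Fin N → Bool) × Bool, ENNReal.ofReal (1 / 8) :=
      ENNReal.mul_lt_mul_right (by simp) (by simp) hlt
    refine absurd (hsum.trans_lt h4) (not_lt.2 (le_of_eq ?_))
    simp only [Finset.sum_const, Finset.card_univ, Fintype.card_prod, Fintype.card_pi,
      Fintype.card_bool, Finset.prod_const, Fintype.card_fin, nsmul_eq_mul]
    rw [← ENNReal.toReal_eq_toReal_iff' (by finiteness) (by finiteness)]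
    simp
    ring
  refine ⟨v.1, (unif N).map (fun k => (x v k, v.2)), hD v, ?_, ?_⟩
  · have := hD v
    refine le_antisymm prob_le_one ?_
    refine le_trans ?_ (Measure.le_map_apply (hm v).aemeasurable _)
    simp [H1]
  · have hs : samples ((unif N).map (fun k => (x v k, v.2))) m =
        V.map (fun κ i => (x v (κ i), v.2)) := by
      have := hD v
      exact (Measure.pi_map_pi (μ := fun _ : Fin m => unif N)
        (f := fun _ : Fin m => fun k => (x v k, v.2)) (fun _ => (hm v).aemeasurable)).symm
    rw [hs]
    refine lt_of_lt_of_le ?_ (Measure.le_map_apply (measurable_of_finite _).aemeasurable _)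
    change ENNReal.ofReal (1 / 32) < V {κ | ENNReal.ofReal (1 / 16) < G v κ}
    set B := {κ | ENNReal.ofReal (1 / 16) < G v κ} with hB
    have hBm : MeasurableSet B := measurableSet_lt measurable_const (hG v)
    have hup : ∫⁻ κ, G v κ ∂V ≤ V B + ENNReal.ofReal (1 / 16) := by
      calc ∫⁻ κ, G v κ ∂V ≤ ∫⁻ κ, (B.indicator 1 κ + ENNReal.ofReal (1 / 16)) ∂V := by
            apply lintegral_mono
            intro κ
            by_cases hκ : κ ∈ B
            · have := hD v
              simp only [Set.indicator_of_mem hκ]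
              exact (atk_le_one _ _ _ _ _).trans le_self_add
            · simp only [Set.indicator_of_notMem hκ, zero_add]
              exact not_lt.1 hκ
        _ = _ := by
            rw [lintegral_add_right _ measurable_const, lintegral_indicator_one hBm]
            simp
    by_contra! hcon
    have : ENNReal.ofReal (1 / 8) ≤ ENNReal.ofReal (1 / 32) + ENNReal.ofReal (1 / 16) :=
      hv.trans (hup.trans (by gcongr))
    rw [← ENNReal.ofReal_add (by norm_num) (by norm_num),
      ENNReal.ofReal_le_ofReal_iff (by norm_num)] at this
    norm_num at this

/-- sign of a label -/
def sg (b : Bool) : ℝ := if b then 1 else -1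

lemma sg_not (b : Bool) : sg (!b) = - sg b := by cases b <;> simp [sg]

/-- first coordinate of the dual position -/
def pu {N : ℕ} (e : Fin N → Bool) : ℝ := ∑ k, if e k then 3 * (3 : ℝ) ^ (k : ℕ) else 0

/-- second coordinate of the dual position -/
def pv {N : ℕ} (e : Fin N → Bool) : ℝ := ∑ k, if e k then ((3 : ℝ) ^ (k : ℕ)) ^ 2 else 0

lemma flip_sum {N : ℕ} (g : Fin N → ℝ) (e : Fin N → Bool) (k : Fin N) (b : Bool)
    (hb : e k = !b) :
    (∑ j, if flipAt e k j then g j else 0) = (∑ j, if e j then g j else 0) + sg b * g k := by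
  rw [← sub_eq_iff_eq_add', ← Finset.sum_sub_distrib, Finset.sum_eq_single k]
  · rw [flipAt_self, hb]; cases b <;> simp [sg]
  · intro j _ hj
    simp [flipAt, Function.update_of_ne hj]
  · simp

lemma pow_ineq (j k : ℕ) (hjk : j ≠ k) :
    0 < ((3 : ℝ) ^ k) ^ 2 - 3 * (3 : ℝ) ^ k * 3 ^ j + (3 ^ j) ^ 2 := by
  wlog h : j < k generalizing j k
  · have := this k j hjk.symm (by omega)
    linarith
  have h1 : (3 : ℝ) ^ (j + 1) ≤ 3 ^ k := pow_le_pow_right₀ (by norm_num) h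
  have h2 : (0 : ℝ) < 3 ^ j := by positivity
  have h3 : (0 : ℝ) < 3 ^ k := by positivity
  rw [pow_succ] at h1
  nlinarith

lemma dec_pos (b : Bool) (t : ℝ) (ht : 0 < t) : decide (0 ≤ sg b * t) = b := by
  cases b <;> simp [sg, ht, ht.le]

/-- For `n ≥ 2`, the class of linear classifiers on `ℝⁿ` is not robust learnable: there are
`ε, δ ∈ (0,1)` such that for every sample size `m` and every (randomized) learner, some
linear target and distribution over its graph force attackable rate `> ε` with probability
`> δ`. -/
theorem stmt2 (n : ℕ) (hn : 2 ≤ n) :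
    ∃ ε : ℝ, 0 < ε ∧ ε < 1 ∧ ∃ δ : ℝ, 0 < δ ∧ δ < 1 ∧
      ∀ m : ℕ, ∀ (Ω : Type*) (_ : MeasurableSpace Ω) (μ : Measure Ω),
        IsProbabilityMeasure μ →
        ∀ a : Multiset (EuclideanSpace ℝ (Fin n) × Bool) → Ω →
            EuclideanSpace ℝ (Fin n) → Bool,
        ∃ (w : EuclideanSpace ℝ (Fin n)) (b : ℝ)
          (D : Measure (EuclideanSpace ℝ (Fin n) × Bool)),
          IsProbabilityMeasure D ∧
          D {p : EuclideanSpace ℝ (Fin n) × Bool | p.2 = decide (0 ≤ ⟪w, p.1⟫ + b)} = 1 ∧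
          ENNReal.ofReal δ <
            samples D m {f | ENNReal.ofReal ε <
              atkRand D μ (fun x => decide (0 ≤ ⟪w, x⟫ + b)) (toTrain f) a} := by
  refine ⟨1 / 16, by norm_num, by norm_num, 1 / 32, by norm_num, by norm_num, ?_⟩
  intro m Ω _ μ hμ a
  let i0 : Fin n := ⟨0, by omega⟩
  let i1 : Fin n := ⟨1, by omega⟩
  have hi : i1 ≠ i0 := by simp [i0, i1]
  let mk : ℝ → ℝ → EuclideanSpace ℝ (Fin n) := fun s c =>
    EuclideanSpace.single i0 s + EuclideanSpace.single i1 c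
  have hin : ∀ s c s' c' : ℝ, ⟪mk s c, mk s' c'⟫ = s * s' + c * c' := by
    intro s c s' c'
    simp only [mk, inner_add_left, inner_add_right, EuclideanSpace.inner_single_left]
    simp [hi, hi.symm]
  have hmk0 : ∀ s c, mk s c i0 = s := by intro s c; simp [mk, hi.symm]
  let N := 2 * m + 2
  let x : (Fin N → Bool) × Bool → Fin N → EuclideanSpace ℝ (Fin n) := fun v k =>
    mk (3 ^ (k : ℕ)) (pv v.1 - 3 ^ (k : ℕ) * pu v.1 - sg v.2 * (3 ^ (k : ℕ)) ^ 2)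
  let h : (Fin N → Bool) → EuclideanSpace ℝ (Fin n) → Bool := fun e y =>
    decide (0 ≤ ⟪mk (-pu e) (-1), y⟫ + pv e)
  have hu : ∀ (v : (Fin N → Bool) × Bool) (k : Fin N), v.1 k = (!v.2) →
      pu (tau k v).1 = pu v.1 + sg v.2 * (3 * 3 ^ (k : ℕ)) := fun v k hv =>
    flip_sum (fun k => 3 * 3 ^ (k : ℕ)) v.1 k v.2 hv
  have hvv : ∀ (v : (Fin N → Bool) × Bool) (k : Fin N), v.1 k = (!v.2) →
      pv (tau k v).1 = pv v.1 + sg v.2 * (3 ^ (k : ℕ)) ^ 2 := fun v k hv =>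
    flip_sum (fun k => (3 ^ (k : ℕ)) ^ 2) v.1 k v.2 hv
  have hs : ∀ (v : (Fin N → Bool) × Bool) (k : Fin N), sg (tau k v).2 = - sg v.2 :=
    fun v k => sg_not _
  obtain ⟨e, D, hD, hD1, hD2⟩ := core μ a (N := N) (m := m) rfl x h
    (by
      intro v k
      simp only [h, x, hin]
      rw [← dec_pos v.2 ((3 ^ (k : ℕ)) ^ 2) (by positivity)]
      congr 2
      rw [dec_pos v.2 ((3 ^ (k : ℕ)) ^ 2) (by positivity)]
      ring)
    (by
      intro v k hv
      simp only [x, hu v k hv, hvv v k hv, hs]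
      congr 1
      ring)
    (by
      intro v k hv j hj
      simp only [h, x, hin, hu v k hv, hvv v k hv, hs]
      have hp := pow_ineq (j : ℕ) (k : ℕ) (fun hh => hj (Fin.ext hh))
      refine Eq.trans ?_ (dec_pos (!v.2) _ hp)
      congr 2
      rw [sg_not]
      ring)
    (by
      intro v k k' hk
      have := congrArg (fun y : EuclideanSpace ℝ (Fin n) => y i0) hk
      simp only [x, hmk0] at this
      exact Fin.ext (pow_right_injective₀ (by norm_num) (by norm_num) this))
  exact ⟨mk (-pu e) (-1), pv e, D, hD, hD1, hD2⟩
end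

section
/- There exists a deterministic learning algorithm A on X = {x ∈ ℝ² : ‖x‖ ≤ 1} such that for every γ ∈ (0,2] and all ε, δ ∈ (0,1): for every target h* = (x ↦ 1[⟨w*,x⟩ + b* ≥ 0]) with w* ≠ 0 and every distribution D over D_{h*} with margin γ, if m ≥ (48·log₂(64/γ)/ε)·log₂(26·log₂(64/γ)/ε) + (8·log₂(64/γ)/ε)·log₂(2/δ) then with probability at least 1−δ over S_trn ~ D^m, atk_D(h*, S_trn, A) ≤ ε. -/
open MeasureTheory ENNReal RealInnerProductSpace

/-- The clean-label attackable rate of a deterministic learner. -/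
noncomputable def atkDet {X : Type*} [MeasurableSpace X] (D : Measure (X × Bool)) (h : X → Bool)
    (S : Multiset (X × Bool)) (A : Multiset (X × Bool) → X → Bool) : ℝ≥0∞ :=
  ⨆ Adv : {f : X → Multiset (X × Bool) // ∀ x : X, ∀ p ∈ f x, p.2 = h p.1},
    D {p : X × Bool | A (S + Adv.1 p.1) p.1 ≠ h p.1}

/-- The (topological) support of a measure. -/
def msupport {α : Type*} [TopologicalSpace α] [MeasurableSpace α] (D : Measure α) : Set α :=
  {p | ∀ U : Set α, IsOpen U → p ∈ U → 0 < D U}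

/-- The closed unit ball of `ℝ²`, as an instance space. -/
abbrev UnitBall2 : Type := {x : EuclideanSpace ℝ (Fin 2) // ‖x‖ ≤ 1}

namespace RL

def dt (a b : ℝ) (x : UnitBall2) : ℝ := a * x.1 0 + b * x.1 1

def Cons (T : Multiset (UnitBall2 × Bool)) (a b : ℝ) : Prop :=
  ∀ p ∈ T, ∀ n ∈ T, p.2 = true → n.2 = false → dt a b n.1 < dt a b p.1

def Lev (T : Multiset (UnitBall2 × Bool)) (k : ℕ) : Prop :=
  ∃ a b : ℤ, |a| + |b| = 2 ^ k ∧ Cons T a b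

open Classical in
noncomputable def learner (T : Multiset (UnitBall2 × Bool)) (x : UnitBall2) : Bool :=
  if h : ∃ k, Lev T k then
    decide (∃ q ∈ T, q.2 = true ∧
      dt (Nat.find_spec h).choose (Nat.find_spec h).choose_spec.choose q.1 ≤
      dt (Nat.find_spec h).choose (Nat.find_spec h).choose_spec.choose x)
  else false

lemma learner_spec (T : Multiset (UnitBall2 × Bool)) (h : ∃ k, Lev T k) :
    ∃ (k : ℕ) (a b : ℤ), |a| + |b| = 2 ^ k ∧ Cons T a b ∧ (∀ j < k, ¬ Lev T j) ∧
      ∀ x, learner T x = true ↔ ∃ q ∈ T, q.2 = true ∧ dt a b q.1 ≤ dt a b x := by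
  classical
  refine ⟨Nat.find h, (Nat.find_spec h).choose, (Nat.find_spec h).choose_spec.choose,
    (Nat.find_spec h).choose_spec.choose_spec.1, (Nat.find_spec h).choose_spec.choose_spec.2,
    fun j hj => Nat.find_min h hj, fun x => ?_⟩
  simp only [learner, dif_pos h, decide_eq_true_eq]

lemma coord_le (x : UnitBall2) (i : Fin 2) : |x.1 i| ≤ 1 := by
  have := PiLp.norm_apply_le x.1 i
  rw [Real.norm_eq_abs] at this
  exact this.trans x.2

lemma dt_bound (a b r : ℝ) (ha : |a| ≤ r) (hb : |b| ≤ r) (x : UnitBall2) : |dt a b x| ≤ 2 * r := by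
  have h0 := coord_le x 0
  have h1 := coord_le x 1
  have hr : 0 ≤ r := (abs_nonneg a).trans ha
  unfold dt
  calc _ ≤ |a * x.1 0| + |b * x.1 1| := abs_add_le _ _
    _ = |a| * |x.1 0| + |b| * |x.1 1| := by rw [abs_mul, abs_mul]
    _ ≤ r * 1 + r * 1 := by gcongr
    _ = _ := by ring

lemma dt_comb (al be a b a' b' : ℝ) (x : UnitBall2) :
    dt (al * a + be * a') (al * b + be * b') x = al * dt a b x + be * dt a' b' x := by
  unfold dt; ring

lemma cons_comb {T : Multiset (UnitBall2 × Bool)} {a b a' b' : ℝ} (h : Cons T a b)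
    (h' : Cons T a' b') (al be : ℝ) (hal : 0 ≤ al) (hbe : 0 ≤ be) (hp : 0 < al + be) :
    Cons T (al * a + be * a') (al * b + be * b') := by
  intro p hp' n hn hp1 hn1
  have h1 := h p hp' n hn hp1 hn1
  have h2 := h' p hp' n hn hp1 hn1
  rw [dt_comb, dt_comb]
  rcases hal.eq_or_lt with h0 | h0
  · subst h0
    have : 0 < be := by linarith
    nlinarith
  · nlinarith [mul_lt_mul_of_pos_left h1 h0, mul_le_mul_of_nonneg_left h2.le hbe]

/-- Key cone lemma in the positive quadrant. -/
lemma cone_pos (C : ℝ → ℝ → Prop)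
    (hC : ∀ a b a' b', C a b → C a' b' → ∀ al be : ℝ, 0 ≤ al → 0 ≤ be → 0 < al + be →
      C (al * a + be * a') (al * b + be * b'))
    (h0 : ¬ C 0 0) (a b x y : ℝ) (ha : 1 ≤ a) (hb : 1 ≤ b) (hab : C a b) (hxy : C x y)
    (hn : |x| + |y| = a + b) (h1 : ¬ C (a - 1) (b + 1)) (h2 : ¬ C (a + 1) (b - 1)) :
    |x - a| < 1 ∧ |y - b| < 1 := by
  have hN : 0 < a + b := by linarith
  -- U = al A' + be A''
  obtain ⟨al, be, hx, hy⟩ : ∃ al be : ℝ, x = al * (a - 1) + be * (a + 1) ∧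
      y = al * (b + 1) + be * (b - 1) := by
    refine ⟨((a + 1) * y - (b - 1) * x) / (2 * (a + b)), ((b + 1) * x - (a - 1) * y) / (2 * (a + b)),
      ?_, ?_⟩ <;> field_simp <;> ring
  have key1 : ¬ (be ≤ 0 ∧ be < al) := by
    rintro ⟨hb0, hlt⟩
    apply h1
    have h3 : 0 < al - be := by linarith
    have := hC x y a b hxy hab (1 / (al - be)) (-2 * be / (al - be)) (by positivity)
      (div_nonneg (by linarith) h3.le)
      (by rw [← add_div]; exact div_pos (by linarith) h3)
    convert this using 1 <;> [rw [hx]; rw [hy]] <;> field_simp <;> ring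
  have key2 : ¬ (al ≤ 0 ∧ al < be) := by
    rintro ⟨hb0, hlt⟩
    apply h2
    have h3 : 0 < be - al := by linarith
    have := hC x y a b hxy hab (1 / (be - al)) (-2 * al / (be - al)) (by positivity)
      (div_nonneg (by linarith) h3.le)
      (by rw [← add_div]; exact div_pos (by linarith) h3)
    convert this using 1 <;> [rw [hx]; rw [hy]] <;> field_simp <;> ring
  have key3 : ¬ (al ≤ 0 ∧ al = be) := by
    rintro ⟨hb0, rfl⟩
    apply h0
    have := hC x y a b hxy hab 1 (-2 * al) (by norm_num) (by linarith) (by linarith)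
    convert this using 1 <;> [rw [hx]; rw [hy]] <;> ring
  have hal : 0 < al := by
    by_contra hcon
    rcases lt_trichotomy al be with h | h | h
    · exact key2 ⟨by linarith, h⟩
    · exact key3 ⟨by linarith, h⟩
    · exact key1 ⟨by linarith, h⟩
  have hbe : 0 < be := by
    by_contra hcon
    exact key1 ⟨by linarith, by linarith⟩
  have hx0 : 0 ≤ x := by
    rw [hx]; exact add_nonneg (mul_nonneg hal.le (by linarith)) (mul_nonneg hbe.le (by linarith))
  have hy0 : 0 ≤ y := by
    rw [hy]; exact add_nonneg (mul_nonneg hal.le (by linarith)) (mul_nonneg hbe.le (by linarith))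
  rw [abs_of_nonneg hx0, abs_of_nonneg hy0] at hn
  have hs : al + be = 1 := by
    have : (al + be - 1) * (a + b) = 0 := by rw [hx, hy] at hn; linear_combination hn
    rcases mul_eq_zero.1 this with h | h <;> linarith
  have hbe' : be = 1 - al := by linarith
  subst hbe'
  constructor
  · rw [abs_lt]; constructor <;> rw [hx] <;> linarith
  · rw [abs_lt]; constructor <;> rw [hy] <;> linarith

lemma geo {T : Multiset (UnitBall2 × Bool)} {k : ℕ} (hk : 1 ≤ k) {a b : ℤ}
    (hab : |a| + |b| = 2 ^ k) (hc : Cons T a b) (hmin : ∀ j < k, ¬ Lev T j) {u v : ℝ}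
    (huv : |u| + |v| = 1) (hu : Cons T u v) :
    |2 ^ k * u - a| < 1 ∧ |2 ^ k * v - b| < 1 ∧
      ∃ a' b' : ℝ, |a' - a| ≤ 1 ∧ |b' - b| ≤ 1 ∧ ¬ Cons T a' b' := by
  have heven : ∀ c d : ℤ, Even c → Even d → |c| + |d| = 2 ^ k → ¬ Cons T c d := by
    intro c d ⟨c', hc'⟩ ⟨d', hd'⟩ hcd hcons
    apply hmin (k - 1) (by omega)
    obtain ⟨k, rfl⟩ : ∃ k', k = k' + 1 := ⟨k - 1, by omega⟩
    refine ⟨c', d', ?_, ?_⟩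
    · simp only [Nat.add_sub_cancel]
      rw [pow_succ] at hcd
      subst hc' hd'
      rw [← two_mul, ← two_mul, abs_mul, abs_mul] at hcd
      norm_num at hcd
      linarith
    · have := cons_comb hcons hcons (1/4) (1/4) (by norm_num) (by norm_num) (by norm_num)
      convert this using 1 <;> subst hc' hd' <;> push_cast <;> ring
  have h2k : Even ((2:ℤ) ^ k) := (even_two).pow_of_ne_zero (by omega)
  have hpar : Odd a ∧ Odd b := by
    have h3 : Even (|a| + |b|) := by rw [hab]; exact h2k
    rw [Int.even_add, even_abs, even_abs] at h3
    by_cases ha : Even a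
    · exact absurd hc (heven a b ha (h3.1 ha) hab)
    · exact ⟨Int.not_even_iff_odd.1 ha, Int.not_even_iff_odd.1 fun h => ha (h3.2 h)⟩
  have h00 : ¬ Cons T 0 0 := by
    intro h
    apply hmin 0 (by omega)
    refine ⟨1, 0, by norm_num, ?_⟩
    intro p hp n hn hp1 hn1
    have := h p hp n hn hp1 hn1
    simp [dt] at this
  obtain ⟨s, hs, hsa⟩ : ∃ s : ℤ, (s = 1 ∨ s = -1) ∧ 1 ≤ s * a := by
    obtain ⟨c, hc⟩ := hpar.1
    rcases lt_or_ge 0 a with h | h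
    · exact ⟨1, Or.inl rfl, by omega⟩
    · exact ⟨-1, Or.inr rfl, by omega⟩
  obtain ⟨t, ht, htb⟩ : ∃ t : ℤ, (t = 1 ∨ t = -1) ∧ 1 ≤ t * b := by
    obtain ⟨c, hc⟩ := hpar.2
    rcases lt_or_ge 0 b with h | h
    · exact ⟨1, Or.inl rfl, by omega⟩
    · exact ⟨-1, Or.inr rfl, by omega⟩
  have hso : Odd s := by rcases hs with rfl | rfl <;> decide
  have hto : Odd t := by rcases ht with rfl | rfl <;> decide
  have e1 : ¬ Cons T ((a - s : ℤ) : ℝ) ((b + t : ℤ) : ℝ) := by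
    apply heven _ _ (hpar.1.sub_odd hso) (hpar.2.add_odd hto)
    rw [← hab]
    rcases hs with rfl | rfl <;> rcases ht with rfl | rfl <;> grind
  have e2 : ¬ Cons T ((a + s : ℤ) : ℝ) ((b - t : ℤ) : ℝ) := by
    apply heven _ _ (hpar.1.add_odd hso) (hpar.2.sub_odd hto)
    rw [← hab]
    rcases hs with rfl | rfl <;> rcases ht with rfl | rfl <;> grind
  have hss : (s : ℝ) * s = 1 := by rcases hs with rfl | rfl <;> norm_num
  have htt : (t : ℝ) * t = 1 := by rcases ht with rfl | rfl <;> norm_num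
  have hsabs : |(s : ℝ)| = 1 := by rcases hs with rfl | rfl <;> norm_num
  have htabs : |(t : ℝ)| = 1 := by rcases ht with rfl | rfl <;> norm_num
  have hU : Cons T (2 ^ k * u) (2 ^ k * v) := by
    have := cons_comb hu hu (2 ^ k) 0 (by positivity) le_rfl (by positivity)
    simpa using this
  have main := cone_pos (fun x y => Cons T (s * x) (t * y))
    (fun a b a' b' h h' al be h1 h2 h3 => by
      have := cons_comb h h' al be h1 h2 h3
      convert this using 1 <;> ring) (by simpa using h00) (s * a) (t * b)
    (s * (2 ^ k * u)) (t * (2 ^ k * v)) (by exact_mod_cast hsa) (by exact_mod_cast htb)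
    (by simpa only [← mul_assoc, hss, htt, one_mul] using hc)
    (by simpa only [← mul_assoc, hss, htt, one_mul] using hU)
    (by
      rw [abs_mul, abs_mul, abs_mul, abs_mul, hsabs, htabs, abs_of_pos (by positivity : (0:ℝ) < 2 ^ k)]
      have h1 : |(a : ℝ)| + |(b : ℝ)| = 2 ^ k := by exact_mod_cast hab
      have h2 : (s : ℝ) * a = |(a : ℝ)| := by
        have h4 : (1:ℝ) ≤ s * a := by exact_mod_cast hsa
        rw [← abs_of_pos (by linarith : (0:ℝ) < s * a), abs_mul, hsabs, one_mul]
      have h3 : (t : ℝ) * b = |(b : ℝ)| := by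
        have h4 : (1:ℝ) ≤ t * b := by exact_mod_cast htb
        rw [← abs_of_pos (by linarith : (0:ℝ) < t * b), abs_mul, htabs, one_mul]
      rw [h2, h3, h1]
      linear_combination (2:ℝ) ^ k * huv)
    (by
      convert e1 using 2 <;> push_cast
      · linear_combination (a:ℝ) * hss
      · linear_combination (b:ℝ) * htt)
    (by
      convert e2 using 2 <;> push_cast
      · linear_combination (a:ℝ) * hss
      · linear_combination (b:ℝ) * htt)
  rw [← mul_sub, ← mul_sub, abs_mul, abs_mul, hsabs, htabs, one_mul, one_mul] at main
  refine ⟨main.1, main.2, _, _, ?_, ?_, e1⟩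
  · push_cast; rw [show (a:ℝ) - s - a = -s by ring, abs_neg, hsabs]
  · push_cast; rw [show (b:ℝ) + t - b = t by ring, htabs]

noncomputable def V (u v : ℝ) (K : ℕ) : Finset (ℤ × ℤ) :=
  {(1, 0), (-1, 0), (0, 1), (0, -1)} ∪ (Finset.Icc 1 K).biUnion fun k =>
    ({⌊2 ^ k * u⌋, ⌊2 ^ k * u⌋ + 1} : Finset ℤ) ×ˢ ({⌊2 ^ k * v⌋, ⌊2 ^ k * v⌋ + 1} : Finset ℤ)

lemma V_card (u v : ℝ) (K : ℕ) : (V u v K).card ≤ 4 + 4 * K := by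
  unfold V
  refine (Finset.card_union_le _ _).trans (Nat.add_le_add Finset.card_le_four ?_)
  refine Finset.card_biUnion_le.trans ?_
  calc _ ≤ ∑ k ∈ Finset.Icc 1 K, 4 := Finset.sum_le_sum fun k _ => by
        rw [Finset.card_product]
        exact Nat.mul_le_mul (Finset.card_le_two (a := _) (b := _)) Finset.card_le_two
    _ = 4 * K := by simp [mul_comm]

lemma near_floor (t : ℝ) (a : ℤ) (h : |t - a| < 1) : a = ⌊t⌋ ∨ a = ⌊t⌋ + 1 := by
  rw [abs_lt] at h
  have h1 := Int.floor_le t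
  have h2 := Int.lt_floor_add_one t
  have h3 : (a : ℝ) < ⌊t⌋ + 2 := by linarith
  have h4 : (⌊t⌋ : ℝ) - 1 < a := by linarith
  have h3' : a < ⌊t⌋ + 2 := by exact_mod_cast h3
  have h4' : ⌊t⌋ - 1 < a := by exact_mod_cast h4
  omega

lemma mem_V {T : Multiset (UnitBall2 × Bool)} {k K : ℕ} {a b : ℤ}
    (hab : |a| + |b| = 2 ^ k) (hc : Cons T a b) (hmin : ∀ j < k, ¬ Lev T j) {u v : ℝ}
    (huv : |u| + |v| = 1) (hu : Cons T u v) (hkK : k ≤ K) : (a, b) ∈ V u v K := by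
  unfold V
  rcases Nat.eq_zero_or_pos k with rfl | hk
  · apply Finset.mem_union_left
    simp only [pow_zero] at hab
    simp only [Finset.mem_insert, Finset.mem_singleton, Prod.mk.injEq]
    grind
  · apply Finset.mem_union_right
    obtain ⟨h1, h2, -⟩ := geo hk hab hc hmin huv hu
    simp only [Finset.mem_biUnion, Finset.mem_Icc, Finset.mem_product, Finset.mem_insert,
      Finset.mem_singleton]
    exact ⟨k, ⟨hk, hkK⟩, near_floor _ _ h1, near_floor _ _ h2⟩

lemma exists_lev {T : Multiset (UnitBall2 × Bool)} {u v : ℝ}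
    (huv : |u| + |v| = 1) (hu : Cons T u v) : ∃ k, Lev T k := by
  classical
  -- a uniform gap
  obtain ⟨η, hη, hgap⟩ : ∃ η : ℝ, 0 < η ∧ ∀ p ∈ T, ∀ n ∈ T, p.2 = true → n.2 = false →
      dt u v n.1 + η ≤ dt u v p.1 := by
    by_cases hne : ((T.toFinset ×ˢ T.toFinset).filter
      (fun q => q.1.2 = true ∧ q.2.2 = false)).Nonempty
    · obtain ⟨q, hq, hmin⟩ := Finset.exists_min_image _
        (fun q => dt u v q.1.1 - dt u v q.2.1) hne
      simp only [Finset.mem_filter, Finset.mem_product, Multiset.mem_toFinset] at hq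
      refine ⟨dt u v q.1.1 - dt u v q.2.1, sub_pos.2 (hu _ hq.1.1 _ hq.1.2 hq.2.1 hq.2.2), ?_⟩
      intro p hp n hn hp1 hn1
      have := hmin (p, n) (by simp [hp, hn, hp1, hn1])
      simp only at this
      linarith
    · refine ⟨1, one_pos, fun p hp n hn hp1 hn1 => absurd ⟨(p, n), ?_⟩ hne⟩
      simp [hp, hn, hp1, hn1]
  obtain ⟨k, hk⟩ := pow_unbounded_of_one_lt (8 / η) (one_lt_two : (1:ℝ) < 2)
  rw [div_lt_iff₀ hη] at hk
  -- choose grid point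
  set N : ℝ := 2 ^ k with hN
  obtain ⟨a, b, hab, h1, h2⟩ : ∃ a b : ℤ, |a| + |b| = 2 ^ k ∧ |a - N * u| ≤ 1 ∧ |b - N * v| ≤ 1 := by
    have hNpos : 0 < N := by positivity
    have hfl := Int.floor_le (N * |u|)
    have hfl2 := Int.lt_floor_add_one (N * |u|)
    have h0 : 0 ≤ ⌊N * |u|⌋ := Int.floor_nonneg.2 (by positivity)
    have hle : ⌊N * |u|⌋ ≤ 2 ^ k := by
      have : (⌊N * |u|⌋ : ℝ) ≤ 2 ^ k := hfl.trans (by rw [← hN]; nlinarith [abs_nonneg v])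
      exact_mod_cast this
    have sg : ∀ z : ℝ, ∃ s : ℤ, |s| = 1 ∧ z = s * |z| := by
      intro z
      rcases le_total 0 z with h | h
      · exact ⟨1, by norm_num, by rw [abs_of_nonneg h]; norm_num⟩
      · exact ⟨-1, by norm_num, by rw [abs_of_nonpos h]; norm_num⟩
    obtain ⟨s, hs, hsu⟩ := sg u
    obtain ⟨t, ht, htv⟩ := sg v
    have hs' : |(s:ℝ)| = 1 := by exact_mod_cast hs
    have ht' : |(t:ℝ)| = 1 := by exact_mod_cast ht
    refine ⟨s * ⌊N * |u|⌋, t * (2 ^ k - ⌊N * |u|⌋), ?_, ?_, ?_⟩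
    · rw [abs_mul, abs_mul, hs, ht, abs_of_nonneg h0, abs_of_nonneg (sub_nonneg.2 hle)]; ring
    · have : ((s * ⌊N * |u|⌋ : ℤ) : ℝ) - N * u = s * (⌊N * |u|⌋ - N * |u|) := by
        push_cast; linear_combination (-N) * hsu
      rw [this, abs_mul, hs', one_mul, abs_le]
      constructor <;> linarith
    · have : ((t * (2 ^ k - ⌊N * |u|⌋) : ℤ) : ℝ) - N * v = t * (N * |u| - ⌊N * |u|⌋) := by
        push_cast; rw [← hN]; linear_combination (-N) * htv - N * t * huv
      rw [this, abs_mul, ht', one_mul, abs_le]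
      constructor <;> linarith
  refine ⟨k, a, b, hab, ?_⟩
  intro p hp n hn hp1 hn1
  have g := hgap p hp n hn hp1 hn1
  have d : ∀ x : UnitBall2, dt a b x = N * dt u v x + dt (a - N * u) (b - N * v) x := by
    intro x; unfold dt; ring
  have b1 := abs_le.1 (dt_bound _ _ 1 h1 h2 p.1)
  have b2 := abs_le.1 (dt_bound _ _ 1 h1 h2 n.1)
  rw [d, d]
  have hNpos : 0 < N := by positivity
  nlinarith

/-- Deterministic core. -/
lemma core {T : Multiset (UnitBall2 × Bool)} {u v β γ : ℝ} {K : ℕ} (huv : |u| + |v| = 1)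
    (hT : ∀ p ∈ T, p.2 = decide (0 ≤ dt u v p.1 + β))
    (hK : ∀ k, K < k → 64 ≤ 2 ^ k * γ) (x : UnitBall2)
    (hx : γ / 4 ≤ |dt u v x + β|)
    (hne : learner T x ≠ decide (0 ≤ dt u v x + β)) :
    ∃ c ∈ V u v K,
      (0 ≤ dt u v x + β ∧ ∀ q ∈ T, q.2 = true → dt c.1 c.2 x < dt c.1 c.2 q.1) ∨
      (dt u v x + β < 0 ∧ ∀ q ∈ T, q.2 = false → dt c.1 c.2 q.1 < dt c.1 c.2 x) := by
  have hu : Cons T u v := by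
    intro p hp n hn hp1 hn1
    have h1 := hT p hp
    have h2 := hT n hn
    rw [hp1] at h1; rw [hn1] at h2
    have h1' := of_decide_eq_true h1.symm
    have h2' := of_decide_eq_false h2.symm
    linarith
  obtain ⟨k, a, b, hab, hc, hmin, hl⟩ := learner_spec T (exists_lev huv hu)
  have hdich : (0 ≤ dt u v x + β ∧ ∀ q ∈ T, q.2 = true → dt a b x < dt a b q.1) ∨
      (dt u v x + β < 0 ∧ ∃ q ∈ T, q.2 = true ∧ dt a b q.1 ≤ dt a b x) := by
    rcases le_or_gt 0 (dt u v x + β) with h | h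
    · left
      refine ⟨h, fun q hq hq1 => ?_⟩
      by_contra hcon
      exact hne (by rw [(hl x).2 ⟨q, hq, hq1, not_lt.1 hcon⟩]; simp [h])
    · right
      refine ⟨h, ?_⟩
      rw [← hl]
      have : decide (0 ≤ dt u v x + β) = false := by simpa using h
      rw [this] at hne
      simpa using hne
  rcases le_or_gt k K with hkK | hkK
  · refine ⟨(a, b), mem_V hab hc hmin huv hu hkK, ?_⟩
    rcases hdich with h | ⟨h, q, hq, hq1, hq2⟩
    · exact Or.inl h
    · exact Or.inr ⟨h, fun n hn hn1 => (hc q hq n hn hq1 hn1).trans_le hq2⟩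
  · exfalso
    have hk1 : 1 ≤ k := by omega
    have h64 := hK k hkK
    obtain ⟨g1, g2, a', b', g3, g4, g5⟩ := geo hk1 hab hc hmin huv hu
    simp only [Cons, not_forall, not_lt] at g5
    obtain ⟨p, hp, n, hn, hp1, hn1, hle⟩ := g5
    set N : ℝ := 2 ^ k with hN
    have hNpos : 0 < N := by positivity
    have d1 : ∀ x : UnitBall2, dt a b x = N * dt u v x - dt (N * u - a) (N * v - b) x := by
      intro x; unfold dt; ring
    have d2 : ∀ x : UnitBall2, dt a' b' x = dt a b x + dt (a' - a) (b' - b) x := by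
      intro x; unfold dt; ring
    have B1 := fun x => abs_le.1 (dt_bound _ _ 1 g1.le g2.le x)
    have B2 := fun x => abs_le.1 (dt_bound _ _ 1 g3 g4 x)
    have hp0 := hT p hp
    have hn0 := hT n hn
    rw [hp1] at hp0; rw [hn1] at hn0
    have hp0' := of_decide_eq_true hp0.symm
    have hn0' := of_decide_eq_false hn0.symm
    rw [not_le] at hn0'
    have hp2 : 0 ≤ N * dt u v p.1 + N * β := by rw [← mul_add]; positivity
    have hn2 : N * dt u v n.1 + N * β < 0 := by rw [← mul_add]; exact mul_neg_of_pos_of_neg hNpos hn0'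
    have hxN : N * (γ / 4) ≤ N * |dt u v x + β| := mul_le_mul_of_nonneg_left hx hNpos.le
    have := B1 x; have := B1 p.1; have := B1 n.1; have := B2 p.1; have := B2 n.1
    rw [d2, d2] at hle
    have e1 := d1 p.1; have e2 := d1 n.1; have e3 := d1 x
    rcases hdich with ⟨h, hq⟩ | ⟨h, q, hq, hq1, hq2⟩
    · have := hq p hp hp1
      rw [abs_of_nonneg h] at hxN
      linarith
    · have := (hc q hq n hn hq1 hn1).trans_le hq2
      rw [abs_of_neg h] at hxN
      linarith

end RL

namespace RL

lemma quantile {Z : Type*} [MeasurableSpace Z] (D : Measure Z) [IsProbabilityMeasure D]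
    (P : Set Z) (hP : MeasurableSet P) (g : Z → ℝ) (hg : Measurable g) (r : ℝ≥0∞) (hr : 0 < r)
    (hr1 : r ≤ 1) :
    ∃ E : Set Z, MeasurableSet E ∧ r ≤ D E ∧ ∀ (m : ℕ) (f : Fin m → Z),
      r < D {z | z ∈ P ∧ ∀ i, f i ∈ P → g z < g (f i)} → ∀ i, f i ∉ E := by
  set F : ℝ → ℝ≥0∞ := fun t => D (P ∩ g ⁻¹' Set.Iio t) with hF
  have hmeas : ∀ t, MeasurableSet (P ∩ g ⁻¹' Set.Iio t) := fun t =>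
    hP.inter (hg measurableSet_Iio)
  have hmono : Monotone F := fun s t hst =>
    measure_mono (Set.inter_subset_inter_right _ (Set.preimage_mono (Set.Iio_subset_Iio hst)))
  by_cases hPr : D P ≤ r
  · refine ⟨Set.univ, MeasurableSet.univ, by simpa using hr1, fun m f hf => ?_⟩
    exact absurd (hf.trans_le (measure_mono (fun z hz => hz.1))) (not_lt.2 hPr)
  rw [not_le] at hPr
  refine ⟨P ∩ g ⁻¹' {t | F t ≤ r}, ?_, ?_, ?_⟩
  · refine hP.inter (hg ?_)
    exact measurableSet_le hmono.measurable measurable_const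
  · set T : Set ℝ := {t | r < F t} with hT
    have hTne : T.Nonempty := by
      by_contra hcon
      have hle : ∀ n : ℕ, F n ≤ r := fun n => by
        by_contra h; exact hcon ⟨n, not_le.1 h⟩
      have hU : (⋃ n : ℕ, P ∩ g ⁻¹' Set.Iio (n : ℝ)) = P := by
        ext z
        simp only [Set.mem_iUnion, Set.mem_inter_iff, Set.mem_preimage, Set.mem_Iio]
        exact ⟨fun ⟨_, h, _⟩ => h, fun h => (exists_nat_gt (g z)).imp fun n hn => ⟨h, hn⟩⟩
      have hm : Monotone fun n : ℕ => P ∩ g ⁻¹' Set.Iio (n : ℝ) := fun a b hab =>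
        Set.inter_subset_inter_right _ (Set.preimage_mono (Set.Iio_subset_Iio (by exact_mod_cast hab)))
      have := hm.measure_iUnion (μ := D)
      rw [hU] at this
      rw [this] at hPr
      exact absurd hPr (not_lt.2 (iSup_le hle))
    have hTb : BddBelow T := by
      by_contra hcon
      have hlt : ∀ n : ℕ, r ≤ F (-(n : ℝ)) := fun n => by
        by_contra h
        apply hcon
        refine ⟨-(n : ℝ), fun t ht => ?_⟩
        by_contra h2
        exact absurd (lt_of_lt_of_le ht (hmono (not_le.1 h2).le)) (not_lt.2 (not_le.1 h).le)
      have hU : (⋂ n : ℕ, P ∩ g ⁻¹' Set.Iio (-(n : ℝ))) = ∅ := by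
        ext z
        simp only [Set.mem_iInter, Set.mem_inter_iff, Set.mem_preimage, Set.mem_Iio,
          Set.mem_empty_iff_false, iff_false, not_forall]
        obtain ⟨n, hn⟩ := exists_nat_gt (-g z)
        exact ⟨n, fun h => by linarith [h.2]⟩
      have hm : Antitone fun n : ℕ => P ∩ g ⁻¹' Set.Iio (-(n : ℝ)) := fun a b hab =>
        Set.inter_subset_inter_right _ (Set.preimage_mono (Set.Iio_subset_Iio
          (neg_le_neg (by exact_mod_cast hab))))
      have := hm.measure_iInter (μ := D) (fun n => (hmeas _).nullMeasurableSet)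
        ⟨0, measure_ne_top _ _⟩
      rw [hU, measure_empty] at this
      exact absurd hr (not_lt.2 (this ▸ le_iInf hlt))
    set t0 := sInf T
    have hbelow : ∀ s < t0, F s ≤ r := fun s hs => by
      by_contra h
      exact absurd (csInf_le hTb (not_le.1 h : s ∈ T)) (not_le.2 hs)
    have habove : ∀ s, t0 < s → r < F s := fun s hs => by
      obtain ⟨t, ht, hts⟩ := exists_lt_of_csInf_lt hTne hs
      exact lt_of_lt_of_le ht (hmono hts.le)
    have ht0 : F t0 ≤ r := by
      obtain ⟨u, hu, hu1, hu2⟩ := exists_seq_strictMono_tendsto t0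
      have hU : (⋃ n : ℕ, P ∩ g ⁻¹' Set.Iio (u n)) = P ∩ g ⁻¹' Set.Iio t0 := by
        ext z
        simp only [Set.mem_iUnion, Set.mem_inter_iff, Set.mem_preimage, Set.mem_Iio]
        exact ⟨fun ⟨n, h, h'⟩ => ⟨h, h'.trans (hu1 n)⟩,
          fun h => ((hu2.eventually_const_lt h.2).exists).imp fun n hn => ⟨h.1, hn⟩⟩
      have hm : Monotone fun n : ℕ => P ∩ g ⁻¹' Set.Iio (u n) := fun a b hab =>
        Set.inter_subset_inter_right _ (Set.preimage_mono (Set.Iio_subset_Iio (hu.monotone hab)))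
      have := hm.measure_iUnion (μ := D)
      rw [hU] at this
      exact this.le.trans (iSup_le fun n => hbelow _ (hu1 n))
    obtain ⟨u, hu, hu1, hu2⟩ := exists_seq_strictAnti_tendsto t0
    have hm : Antitone fun n : ℕ => P ∩ g ⁻¹' Set.Iio (u n) := fun a b hab =>
      Set.inter_subset_inter_right _ (Set.preimage_mono (Set.Iio_subset_Iio (hu.antitone hab)))
    have := hm.measure_iInter (μ := D) (fun n => (hmeas _).nullMeasurableSet)
      ⟨0, measure_ne_top _ _⟩
    calc r ≤ D (⋂ n : ℕ, P ∩ g ⁻¹' Set.Iio (u n)) := by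
          rw [this]; exact le_iInf fun n => (habove _ (hu1 n)).le
      _ ≤ _ := by
          refine measure_mono fun z hz => ?_
          simp only [Set.mem_iInter, Set.mem_inter_iff, Set.mem_preimage, Set.mem_Iio] at hz
          refine ⟨(hz 0).1, ?_⟩
          have : g z ≤ t0 := ge_of_tendsto' hu2 fun n => (hz n).2.le
          exact (hmono this).trans ht0
  · intro m f hf i hi
    have h1 : F (g (f i)) ≤ r := hi.2
    refine absurd (hf.trans_le (measure_mono fun z hz => ?_)) (not_lt.2 h1)
    exact ⟨hz.1, hz.2 i hi.1⟩

lemma miss {Z : Type*} [MeasurableSpace Z] (D : Measure Z) [IsProbabilityMeasure D]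
    (E : Set Z) (hE : MeasurableSet E) (r : ℝ) (hr1 : r ≤ 1)
    (h : ENNReal.ofReal r ≤ D E) (m : ℕ) :
    samples D m {f | ∀ i, f i ∉ E} ≤ ENNReal.ofReal (Real.exp (-(r * m))) := by
  have : {f : Fin m → Z | ∀ i, f i ∉ E} = Set.univ.pi fun _ => Eᶜ := by
    ext f; simp
  rw [samples, this, Measure.pi_pi, Finset.prod_const, Finset.card_univ, Fintype.card_fin]
  have h1 : D Eᶜ ≤ ENNReal.ofReal (Real.exp (-r)) := by
    rw [prob_compl_eq_one_sub hE]
    calc 1 - D E ≤ 1 - ENNReal.ofReal r := tsub_le_tsub_left h 1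
      _ ≤ ENNReal.ofReal (1 - r) := by
        rw [← ENNReal.ofReal_one]
        rcases le_total 0 r with h0 | h0
        · rw [ENNReal.ofReal_sub _ h0]
        · rw [ENNReal.ofReal_of_nonpos h0, tsub_zero]
          exact ENNReal.ofReal_le_ofReal (by linarith)
      _ ≤ _ := ENNReal.ofReal_le_ofReal (by linarith [Real.add_one_le_exp (-r)])
  calc D Eᶜ ^ m ≤ ENNReal.ofReal (Real.exp (-r)) ^ m := pow_le_pow_left' h1 m
    _ = _ := by
      rw [← ENNReal.ofReal_pow (Real.exp_pos _).le, ← Real.exp_nat_mul]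
      congr 2; ring

lemma dt_meas (a b : ℝ) : Measurable fun z : UnitBall2 × Bool => dt a b z.1 := by
  unfold dt
  have : ∀ i : Fin 2, Measurable fun z : UnitBall2 × Bool => z.1.1 i := by
    intro i
    have : Continuous fun x : UnitBall2 => x.1 i := by fun_prop
    exact this.measurable.comp measurable_fst
  exact ((this 0).const_mul a).add ((this 1).const_mul b)

lemma numeric (γ ε δ : ℝ) (hγ : 0 < γ) (hγ2 : γ ≤ 2) (hε : 0 < ε) (hε1 : ε < 1) (hδ : 0 < δ)
    (m : ℕ) (hm : 48 * Real.logb 2 (64 / γ) / ε * Real.logb 2 (26 * Real.logb 2 (64 / γ) / ε) +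
              8 * Real.logb 2 (64 / γ) / ε * Real.logb 2 (2 / δ) ≤ (m : ℝ)) (hδ1 : δ < 1) :
    5 ≤ Real.logb 2 (64 / γ) ∧ 10 * Real.logb 2 (64 / γ) *
      Real.exp (-(ε / (10 * Real.logb 2 (64 / γ)) * m)) ≤ δ := by
  have hL : 5 ≤ Real.logb 2 (64 / γ) := by
    rw [Real.le_logb_iff_rpow_le (by norm_num) (by positivity), le_div_iff₀ hγ]
    norm_num
    linarith
  refine ⟨hL, ?_⟩
  generalize Real.logb 2 (64 / γ) = L at *
  have hL0 : 0 < L := by linarith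
  have hlog2 : 0 < Real.log 2 := Real.log_pos (by norm_num)
  have hlog2' : Real.log 2 < 0.7 := by linarith [Real.log_two_lt_d9]
  have h1 : Real.log (10 * L) ≤ Real.logb 2 (26 * L / ε) := by
    have h0 : 0 ≤ Real.log (26 * L / ε) := Real.log_nonneg (by rw [le_div_iff₀ hε]; linarith)
    calc Real.log (10 * L) ≤ Real.log (26 * L / ε) := by
          apply Real.log_le_log (by positivity)
          rw [le_div_iff₀ hε]; nlinarith
      _ ≤ _ := by
          rw [Real.logb, le_div_iff₀ hlog2]; nlinarith
  have h2 : Real.log (1 / δ) ≤ 0.8 * Real.logb 2 (2 / δ) := by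
    have h0 : 0 ≤ Real.log (2 / δ) := Real.log_nonneg (by rw [le_div_iff₀ hδ]; linarith)
    calc Real.log (1 / δ) ≤ Real.log (2 / δ) := by
          apply Real.log_le_log (by positivity); gcongr; norm_num
      _ ≤ _ := by
          rw [Real.logb, ← mul_div_assoc, le_div_iff₀ hlog2]; nlinarith
  have h10 : 0 ≤ Real.log (10 * L) := Real.log_nonneg (by linarith)
  have h3 : Real.log (10 * L) + Real.log (1 / δ) ≤ ε / (10 * L) * m := by
    have := mul_le_mul_of_nonneg_left hm (by positivity : 0 ≤ ε / (10 * L))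
    have e : ε / (10 * L) * (48 * L / ε * Real.logb 2 (26 * L / ε) +
              8 * L / ε * Real.logb 2 (2 / δ)) =
        4.8 * Real.logb 2 (26 * L / ε) + 0.8 * Real.logb 2 (2 / δ) := by
      field_simp
      ring
    rw [e] at this
    linarith
  calc 10 * L * Real.exp (-(ε / (10 * L) * m))
      ≤ 10 * L * Real.exp (-(Real.log (10 * L) + Real.log (1 / δ))) := by gcongr
    _ = δ := by
      rw [neg_add, Real.exp_add, Real.exp_neg, Real.exp_neg, Real.exp_log (by positivity),
        Real.exp_log (by positivity)]
      field_simp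

lemma supp_null (D : Measure (UnitBall2 × Bool)) : D (msupport D)ᶜ = 0 := by
  have : D.support ⊆ msupport D := by
    intro p hp U hU hpU
    exact (Measure.mem_support_iff_forall p).1 hp U (hU.mem_nhds hpU)
  exact measure_mono_null (Set.compl_subset_compl.2 this) Measure.measure_compl_support

/-- region of errors associated to a direction and a label -/
def region {m : ℕ} (f : Fin m → UnitBall2 × Bool) (c : (ℤ × ℤ) × Bool) :
    Set (UnitBall2 × Bool) :=
  {z | z.2 = c.2 ∧ ∀ i, (f i).2 = c.2 →
    (if c.2 then (1:ℝ) else -1) * dt c.1.1 c.1.2 z.1 <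
      (if c.2 then (1:ℝ) else -1) * dt c.1.1 c.1.2 (f i).1}

lemma region_quantile (D : Measure (UnitBall2 × Bool)) [IsProbabilityMeasure D]
    (r : ℝ≥0∞) (hr : 0 < r) (hr1 : r ≤ 1) (c : (ℤ × ℤ) × Bool) :
    ∃ E : Set (UnitBall2 × Bool), MeasurableSet E ∧ r ≤ D E ∧
      ∀ (m : ℕ) (f : Fin m → UnitBall2 × Bool), r < D (region f c) → ∀ i, f i ∉ E := 
  quantile D {z | z.2 = c.2} (measurable_snd (measurableSet_singleton c.2))
    (fun z => (if c.2 then (1:ℝ) else -1) * dt c.1.1 c.1.2 z.1)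
    ((dt_meas _ _).const_mul _) r hr hr1

end RL

/-- A single algorithm robustly learns `2`-dimensional linear classifiers with margin `γ` using
`(48 log₂(64/γ)/ε) log₂(26 log₂(64/γ)/ε) + (8 log₂(64/γ)/ε) log₂(2/δ)` samples,
simultaneously for every `γ ∈ (0,2]`. -/
theorem stmt4 :
    ∃ A : Multiset (UnitBall2 × Bool) → UnitBall2 → Bool,
      ∀ γ : ℝ, 0 < γ → γ ≤ 2 →
      ∀ ε δ : ℝ, 0 < ε → ε < 1 → 0 < δ → δ < 1 →
      ∀ (w : EuclideanSpace ℝ (Fin 2)) (b : ℝ), w ≠ 0 →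
      ∀ D : Measure (UnitBall2 × Bool), IsProbabilityMeasure D →
        D {p : UnitBall2 × Bool | p.2 = decide (0 ≤ ⟪w, p.1.1⟫ + b)} = 1 →
        (∀ p ∈ msupport D,
          γ * ‖w‖ / 2 ≤ (if p.2 then (1 : ℝ) else -1) * (⟪w, p.1.1⟫ + b)) →
        ∀ m : ℕ,
          48 * Real.logb 2 (64 / γ) / ε * Real.logb 2 (26 * Real.logb 2 (64 / γ) / ε) +
              8 * Real.logb 2 (64 / γ) / ε * Real.logb 2 (2 / δ) ≤ (m : ℝ) →
          ENNReal.ofReal (1 - δ) ≤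
            samples D m {f | atkDet D (fun x => decide (0 ≤ ⟪w, x.1⟫ + b)) (toTrain f) A ≤
              ENNReal.ofReal ε} := by
  classical
  refine ⟨RL.learner, ?_⟩
  intro γ hγ hγ2 ε δ hε hε1 hδ hδ1 w b hw D hD hDG hmar m hm
  obtain ⟨hL, hnum⟩ := RL.numeric γ ε δ hγ hγ2 hε hε1 hδ m hm hδ1
  set L := Real.logb 2 (64 / γ) with hLdef
  have hL0 : 0 < L := by linarith
  -- normalise the target
  set s : ℝ := |w 0| + |w 1| with hs
  have hs0 : 0 < s := by
    rcases (by positivity : 0 ≤ s).eq_or_lt with h | h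
    · exfalso
      apply hw
      have h0 : |w 0| = 0 := by linarith [abs_nonneg (w 0), abs_nonneg (w 1)]
      have h1 : |w 1| = 0 := by linarith [abs_nonneg (w 0), abs_nonneg (w 1)]
      ext i
      fin_cases i
      · simpa using h0
      · simpa using h1
    · exact h
  have hws : s / 2 ≤ ‖w‖ := by
    have h0 := PiLp.norm_apply_le w 0
    have h1 := PiLp.norm_apply_le w 1
    rw [Real.norm_eq_abs] at h0 h1
    linarith
  set u := w 0 / s with hu
  set v := w 1 / s with hv
  set β := b / s with hβ
  have huv : |u| + |v| = 1 := by
    rw [hu, hv, abs_div, abs_div, abs_of_pos hs0, ← add_div, ← hs, div_self hs0.ne']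
  have hin : ∀ x : UnitBall2, ⟪w, x.1⟫ + b = s * (RL.dt u v x + β) := by
    intro x
    have : ⟪w, x.1⟫ = w 0 * x.1 0 + w 1 * x.1 1 := by
      rw [PiLp.inner_apply, Fin.sum_univ_two]
      simp [mul_comm]
    rw [this, RL.dt, hu, hv, hβ]
    field_simp
  have hdec : ∀ x : UnitBall2, decide (0 ≤ ⟪w, x.1⟫ + b) = decide (0 ≤ RL.dt u v x + β) := by
    intro x
    rw [hin, decide_eq_decide]
    exact mul_nonneg_iff_of_pos_left hs0
  simp only [hdec] at hDG ⊢
  set G : Set (UnitBall2 × Bool) := {p | p.2 = decide (0 ≤ RL.dt u v p.1 + β)} with hG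
  have hGm : MeasurableSet G := by
    have h1 : MeasurableSet {p : UnitBall2 × Bool | 0 ≤ RL.dt u v p.1 + β} :=
      measurableSet_le measurable_const ((RL.dt_meas u v).add_const β)
    have h2 : MeasurableSet {p : UnitBall2 × Bool | p.2 = true} :=
      measurable_snd (measurableSet_singleton true)
    have : G = ({p : UnitBall2 × Bool | 0 ≤ RL.dt u v p.1 + β} ∩ {p | p.2 = true}) ∪
        ({p : UnitBall2 × Bool | 0 ≤ RL.dt u v p.1 + β}ᶜ ∩ {p | p.2 = true}ᶜ) := by
      ext ⟨x, y⟩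
      by_cases h : 0 ≤ RL.dt u v x + β <;> cases y <;> simp [hG, h]
    rw [this]
    exact (h1.inter h2).union (h1.compl.inter h2.compl)
  have hGc : D Gᶜ = 0 := by rw [prob_compl_eq_one_sub hGm, hDG, tsub_self]
  have hmar' : ∀ p ∈ msupport D, γ / 4 ≤ |RL.dt u v p.1 + β| := by
    intro p hp
    have h1 := hmar p hp
    rw [hin] at h1
    have h2 : (if p.2 then (1:ℝ) else -1) * (s * (RL.dt u v p.1 + β)) ≤
        s * |RL.dt u v p.1 + β| := by
      split_ifs
      · rw [one_mul]; exact mul_le_mul_of_nonneg_left (le_abs_self _) hs0.le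
      · nlinarith [neg_abs_le (RL.dt u v p.1 + β)]
    have h3 : s * (γ / 4) ≤ s * |RL.dt u v p.1 + β| := by nlinarith
    exact le_of_mul_le_mul_left h3 hs0
  set K := ⌊L⌋₊ with hKdef
  have hK : ∀ k, K < k → 64 ≤ (2:ℝ) ^ k * γ := by
    intro k hk
    have h1 : L < k := (Nat.floor_lt hL0.le).1 hk
    rw [hLdef, Real.logb_lt_iff_lt_rpow (by norm_num) (by positivity), Real.rpow_natCast,
      div_lt_iff₀ hγ] at h1
    exact h1.le
  set I : Finset ((ℤ × ℤ) × Bool) := RL.V u v K ×ˢ Finset.univ with hI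
  have hIc : (I.card : ℝ) ≤ 10 * L := by
    have h1 : I.card ≤ (4 + 4 * K) * 2 := by
      rw [hI, Finset.card_product]
      exact Nat.mul_le_mul (RL.V_card u v K) (by simp)
    have h2 : (I.card : ℝ) ≤ (4 + 4 * K) * 2 := by exact_mod_cast h1
    have h3 : (K : ℝ) ≤ L := Nat.floor_le hL0.le
    linarith
  set r := ε / (10 * L) with hr
  have hr0 : 0 < r := by positivity
  have hr1 : r ≤ 1 := by rw [hr, div_le_one (by positivity)]; linarith
  choose E hEm hEr hE using fun c => RL.region_quantile D (ENNReal.ofReal r)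
    (ENNReal.ofReal_pos.2 hr0) (by simpa using hr1) c
  have hμ : IsProbabilityMeasure (samples D m) := by unfold samples; infer_instance
  set Bad : Set (Fin m → UnitBall2 × Bool) :=
    {f | ∃ i, f i ∈ Gᶜ} ∪ ⋃ c ∈ I, {f | ∀ i, f i ∉ E c} with hBad
  have hBadm : MeasurableSet Bad := by
    refine MeasurableSet.union ?_ (Finset.measurableSet_biUnion _ fun c _ => ?_)
    · rw [Set.ofPred_exists]
      exact MeasurableSet.iUnion fun i => measurable_pi_apply i hGm.compl
    · rw [Set.ofPred_forall]
      exact MeasurableSet.iInter fun i =>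
        (measurable_pi_apply (X := fun _ : Fin m => UnitBall2 × Bool) i) (hEm c).compl
  have hBadμ : samples D m Bad ≤ ENNReal.ofReal δ := by
    have h1 : samples D m {f | ∃ i, f i ∈ Gᶜ} = 0 := by
      rw [Set.ofPred_exists, measure_iUnion_null_iff]
      intro i
      have := (measurePreserving_eval (fun _ : Fin m => D) i).measure_preimage
        hGm.compl.nullMeasurableSet
      rw [hGc] at this
      exact this
    calc samples D m Bad ≤ samples D m {f | ∃ i, f i ∈ Gᶜ} +
          samples D m (⋃ c ∈ I, {f | ∀ i, f i ∉ E c}) := measure_union_le _ _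
      _ ≤ 0 + ∑ c ∈ I, ENNReal.ofReal (Real.exp (-(r * m))) := by
          refine add_le_add h1.le ((measure_biUnion_finset_le _ _).trans ?_)
          exact Finset.sum_le_sum fun c _ => RL.miss D (E c) (hEm c) r hr1 (hEr c) m
      _ = ENNReal.ofReal (I.card * Real.exp (-(r * m))) := by
          rw [zero_add, Finset.sum_const, nsmul_eq_mul, ENNReal.ofReal_mul (by positivity),
            ENNReal.ofReal_natCast]
      _ ≤ _ := ENNReal.ofReal_le_ofReal (le_trans (by gcongr) hnum)
  have hgood : ENNReal.ofReal (1 - δ) ≤ samples D m Badᶜ := by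
    rw [prob_compl_eq_one_sub hBadm, ENNReal.ofReal_sub _ hδ.le, ENNReal.ofReal_one]
    exact tsub_le_tsub_left hBadμ 1
  refine hgood.trans (measure_mono fun f hf => ?_)
  simp only [hBad, Set.mem_compl_iff, Set.mem_union, Set.mem_ofPred_eq, Set.mem_iUnion, not_or,
    not_exists, not_not] at hf
  obtain ⟨hf1, hf2⟩ := hf
  have hreg : ∀ c ∈ I, D (RL.region f c) ≤ ENNReal.ofReal r := by
    intro c hc
    by_contra hcon
    exact hf2 c hc (hE c m f (not_le.1 hcon))
  change atkDet D (fun x => decide (0 ≤ RL.dt u v x + β)) (toTrain f) RL.learner ≤ ENNReal.ofReal ε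
  unfold atkDet
  refine iSup_le fun ⟨Adv, hAdv⟩ => ?_
  have hsub : {p : UnitBall2 × Bool | RL.learner (toTrain f + Adv p.1) p.1 ≠
      decide (0 ≤ RL.dt u v p.1 + β)} ⊆ (Gᶜ ∪ (msupport D)ᶜ) ∪ ⋃ c ∈ I, RL.region f c := by
    intro p hp
    by_cases hpG : p ∈ G
    swap
    · exact Or.inl (Or.inl hpG)
    by_cases hpS : p ∈ msupport D
    swap
    · exact Or.inl (Or.inr hpS)
    right
    have hmem : ∀ i, f i ∈ toTrain f + Adv p.1 := fun i => by
      rw [Multiset.mem_add]; left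
      simp [toTrain]
    have hT : ∀ q ∈ toTrain f + Adv p.1, q.2 = decide (0 ≤ RL.dt u v q.1 + β) := by
      intro q hq
      rw [Multiset.mem_add] at hq
      rcases hq with hq | hq
      · have : ∃ i, f i = q := by simpa [toTrain] using hq
        obtain ⟨i, rfl⟩ := this
        exact hf1 i
      · exact hAdv p.1 q hq
    obtain ⟨c, hc, h⟩ := RL.core huv hT hK p.1 (hmar' p hpS) hp
    have hpG' : p.2 = decide (0 ≤ RL.dt u v p.1 + β) := hpG
    simp only [Set.mem_iUnion]
    rcases h with ⟨h0, h⟩ | ⟨h0, h⟩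
    · refine ⟨(c, true), by simp [hI, hc], by simp [hpG', h0], fun i hi => ?_⟩
      simpa using h (f i) (hmem i) hi
    · refine ⟨(c, false), by simp [hI, hc], by simp [hpG', h0], fun i hi => ?_⟩
      simpa using h (f i) (hmem i) hi
  refine (measure_mono hsub).trans ?_
  calc _ ≤ D (Gᶜ ∪ (msupport D)ᶜ) + D (⋃ c ∈ I, RL.region f c) := measure_union_le _ _
    _ ≤ 0 + ∑ c ∈ I, ENNReal.ofReal r := by
        refine add_le_add (measure_union_null hGc (RL.supp_null D)).le
          ((measure_biUnion_finset_le _ _).trans (Finset.sum_le_sum hreg))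
    _ = ENNReal.ofReal (I.card * r) := by
        rw [zero_add, Finset.sum_const, nsmul_eq_mul, ENNReal.ofReal_mul (by positivity),
          ENNReal.ofReal_natCast]
    _ ≤ ENNReal.ofReal ε := by
        apply ENNReal.ofReal_le_ofReal
        calc I.card * r ≤ 10 * L * r := by gcongr
          _ = ε := by rw [hr]; field_simp
end

section
/- Let n > 256 and X = {x ∈ ℝⁿ : ‖x‖ ≤ 9/8}. For every ε ∈ (0, 1/16] and every (possibly randomized) learning algorithm A, there exist a linear target h* = (x ↦ 1[⟨w*,x⟩ + b* ≥ 0]) and a distribution D over D_{h*} with margin γ = 1/8 such that E_{S_trn~D^m}[ atk_D(h*, S_trn, A) ] > ε whenever m ≤ e^{(n−1)/128}/(192ε). -/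
open MeasureTheory ENNReal RealInnerProductSpace

/-- The closed ball of radius `9/8` in `ℝⁿ`, as an instance space. -/
abbrev Ball98 (n : ℕ) : Type := {x : EuclideanSpace ℝ (Fin n) // ‖x‖ ≤ 9 / 8}

noncomputable def dmeas {α I : Type*} [MeasurableSpace α] [Fintype I] (ν : I → ℝ≥0∞) (e : I → α) :
    Measure α := ∑ i, ν i • Measure.dirac (e i)

lemma dmeas_lintegral {α I : Type*} [MeasurableSpace α] [MeasurableSingletonClass α] [Fintype I]
    (ν : I → ℝ≥0∞) (e : I → α) (f : α → ℝ≥0∞) :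
    ∫⁻ x, f x ∂(dmeas ν e) = ∑ i, ν i * f (e i) := by
  unfold dmeas
  rw [lintegral_finsetSum_measure]
  simp [lintegral_smul_measure, lintegral_dirac]

lemma dmeas_apply {α I : Type*} [MeasurableSpace α] [MeasurableSingletonClass α] [Fintype I]
    (ν : I → ℝ≥0∞) (e : I → α) (S : Set α) :
    dmeas ν e S = ∑ i, ν i * S.indicator 1 (e i) := by
  unfold dmeas
  simp [Measure.finsetSum_apply, Measure.dirac_apply]

lemma dmeas_prob {α I : Type*} [MeasurableSpace α] [MeasurableSingletonClass α] [Fintype I]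
    (ν : I → ℝ≥0∞) (e : I → α) (h : ∑ i, ν i = 1) : IsProbabilityMeasure (dmeas ν e) :=
  ⟨by rw [dmeas_apply]; simpa using h⟩

lemma dmeas_pi {α I : Type*} [MeasurableSpace α] [MeasurableSingletonClass α] [Fintype I]
    (ν : I → ℝ≥0∞) (e : I → α) (h : ∑ i, ν i = 1) (m : ℕ) :
    samples (dmeas ν e) m =
      dmeas (fun ι : Fin m → I => ∏ j, ν (ι j)) (fun ι j => e (ι j)) := by
  classical
  have := dmeas_prob ν e h
  unfold samples
  refine Measure.pi_eq ?_
  intro s hs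
  simp only [dmeas_apply]
  rw [Finset.prod_univ_sum, Fintype.piFinset_univ]
  refine Finset.sum_congr rfl fun ι _ => ?_
  rw [Finset.prod_mul_distrib]
  congr 1
  by_cases hh : ∀ j, e (ι j) ∈ s j
  · rw [Set.indicator_of_mem (by simpa using hh)]
    symm
    apply Finset.prod_eq_one
    intro j _
    rw [Set.indicator_of_mem (hh j)]; rfl
  · rw [Set.indicator_of_notMem (by simpa using hh)]
    push Not at hh
    obtain ⟨j, hj⟩ := hh
    symm
    apply Finset.prod_eq_zero (Finset.mem_univ j)
    rw [Set.indicator_of_notMem hj]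

lemma dmeas_prod {α I Ω : Type*} [MeasurableSpace α] [MeasurableSingletonClass α] [Fintype I]
    [MeasurableSpace Ω] (μ : Measure Ω) [IsProbabilityMeasure μ]
    (ν : I → ℝ≥0∞) (e : I → α) (S : Set (α × Ω)) :
    ∑ i, ν i * μ {ω | (e i, ω) ∈ S} ≤ ((dmeas ν e).prod μ) S := by
  rw [← measure_toMeasurable S, Measure.prod_apply (measurableSet_toMeasurable _ _),
    dmeas_lintegral]
  gcongr with i
  intro ω hω
  exact subset_toMeasurable _ _ hω

lemma atk_cons {X : Type*} [MeasurableSpace X] {Ω : Type*} [MeasurableSpace Ω]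
    (D : Measure (X × Bool)) (μ : Measure Ω) (h : X → Bool)
    (S T : Multiset (X × Bool)) (a : Multiset (X × Bool) → Ω → X → Bool)
    (hT : ∀ p ∈ T, p.2 = h p.1) :
    atkRand D μ h (S + T) a ≤ atkRand D μ h S a := by
  unfold atkRand
  refine iSup_le fun Adv => ?_
  refine le_iSup_of_le ⟨fun x => T + Adv.1 x, ?_⟩ ?_
  · intro x p hp
    rcases Multiset.mem_add.1 hp with hp | hp
    · exact hT p hp
    · exact Adv.2 x p hp
  · simp only [add_assoc]; exact le_rfl

noncomputable def Eatk {X I Ω : Type*} [MeasurableSpace X] [Fintype I]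
    [MeasurableSpace Ω] (μ : Measure Ω) (h : X → Bool)
    (a : Multiset (X × Bool) → Ω → X → Bool)
    (ν : I → ℝ≥0∞) (e : I → X × Bool) (m : ℕ) : ℝ≥0∞ :=
  ∑ ι : Fin m → I, (∏ j, ν (ι j)) * atkRand (dmeas ν e) μ h (toTrain fun j => e (ι j)) a

lemma Eatk_eq {X I Ω : Type*} [MeasurableSpace X] [MeasurableSingletonClass X] [Fintype I]
    [MeasurableSpace Ω] (μ : Measure Ω) (h : X → Bool)
    (a : Multiset (X × Bool) → Ω → X → Bool)
    (ν : I → ℝ≥0∞) (e : I → X × Bool) (hν : ∑ i, ν i = 1) (m : ℕ) :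
    ∫⁻ f, atkRand (dmeas ν e) μ h (toTrain f) a ∂(samples (dmeas ν e) m) = Eatk μ h a ν e m := by
  rw [dmeas_pi ν e hν, dmeas_lintegral]; rfl

lemma Eatk_succ {X I Ω : Type*} [MeasurableSpace X] [Fintype I]
    [MeasurableSpace Ω] (μ : Measure Ω) (h : X → Bool)
    (a : Multiset (X × Bool) → Ω → X → Bool)
    (ν : I → ℝ≥0∞) (e : I → X × Bool) (hν : ∑ i, ν i = 1)
    (he : ∀ i, (e i).2 = h (e i).1) (m : ℕ) :
    Eatk μ h a ν e (m + 1) ≤ Eatk μ h a ν e m := by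
  unfold Eatk
  rw [← (Fin.consEquiv (fun _ => I)).sum_comp, Fintype.sum_prod_type, Finset.sum_comm]
  refine Finset.sum_le_sum fun ι _ => ?_
  have : ∀ i : I, (∏ j, ν ((Fin.consEquiv (fun _ : Fin (m+1) => I)) (i, ι) j)) *
      atkRand (dmeas ν e) μ h (toTrain fun j => e ((Fin.consEquiv (fun _ => I)) (i, ι) j)) a
      ≤ ν i * ((∏ j, ν (ι j)) * atkRand (dmeas ν e) μ h (toTrain fun j => e (ι j)) a) := by
    intro i
    rw [Fin.prod_univ_succ, mul_assoc]
    simp only [Fin.consEquiv, Equiv.coe_fn_mk, Fin.cons_zero, Fin.cons_succ]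
    gcongr
    have : (toTrain fun j => e ((Fin.cons i ι : Fin (m+1) → I) j)) =
        (toTrain fun j => e (ι j)) + {e i} := by
      unfold toTrain
      rw [List.ofFn_succ]
      simp only [Fin.cons_zero, Fin.cons_succ]
      rw [add_comm (_ : Multiset (X × Bool)), Multiset.singleton_add, Multiset.cons_coe]
    rw [this]
    apply atk_cons
    simpa using he i
  refine (Finset.sum_le_sum fun i _ => this i).trans ?_
  rw [← Finset.sum_mul, hν, one_mul]

lemma Eatk_anti {X I Ω : Type*} [MeasurableSpace X] [Fintype I]
    [MeasurableSpace Ω] (μ : Measure Ω) (h : X → Bool)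
    (a : Multiset (X × Bool) → Ω → X → Bool)
    (ν : I → ℝ≥0∞) (e : I → X × Bool) (hν : ∑ i, ν i = 1)
    (he : ∀ i, (e i).2 = h (e i).1) : Antitone (Eatk μ h a ν e) :=
  antitone_nat_of_succ_le (Eatk_succ μ h a ν e hν he)

noncomputable def wt {G : Type*} [Fintype G] (ε : ℝ) : Option (G × Bool) → ℝ≥0∞
  | none => ENNReal.ofReal (1 - 16 * ε)
  | some _ => ENNReal.ofReal (8 * ε / Fintype.card G)

def exm {X G : Type*} (f : X) (x : G × Bool → X) : Option (G × Bool) → X × Bool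
  | none => (f, true)
  | some z => (x z, z.2)

lemma wt_ok {G : Type*} [Fintype G] [Nonempty G] (ε : ℝ) (hε0 : 0 < ε) (hε : ε ≤ 1 / 16)
    (P : G → Prop) [DecidablePred P] (q : ℝ)
    (hq : (Fintype.card {A // ¬ P A} : ℝ) ≤ q * Fintype.card G) :
    ENNReal.ofReal (1 - 16 * ε * q) ≤
      ∑ i : Option (G × Bool), wt ε i * (match i with | none => 1 | some z => if P z.1 then 1 else 0) := by
  rw [Fintype.sum_option, Fintype.sum_prod_type]
  have hG : (0:ℝ) < Fintype.card G := by exact_mod_cast Fintype.card_pos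
  have h1 : ∀ A : G, ∑ y : Bool, wt ε (some (A, y)) * (if P A then (1:ℝ≥0∞) else 0) =
      ENNReal.ofReal (if P A then 16 * ε / Fintype.card G else 0) := by
    intro A
    split_ifs
    · simp only [Fintype.sum_bool, wt, mul_one]
      rw [← ENNReal.ofReal_add (by positivity) (by positivity)]
      congr 1; ring
    · simp
  simp only [h1]
  rw [← ENNReal.ofReal_sum_of_nonneg (by intro i _; split_ifs <;> positivity), wt, mul_one,
    ← ENNReal.ofReal_add (by linarith) (Finset.sum_nonneg (by intro i _; split_ifs <;> positivity))]
  apply ENNReal.ofReal_le_ofReal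
  rw [← Finset.sum_filter, Finset.sum_const, nsmul_eq_mul]
  have h2 : (Fintype.card {A // ¬ P A} : ℝ) + (Finset.univ.filter P).card = Fintype.card G := by
    rw [Fintype.card_subtype_compl, Nat.cast_sub (Fintype.card_subtype_le _), Fintype.card_subtype]
    ring
  have h3 : (1 - q) * Fintype.card G ≤ (Finset.univ.filter P).card := by linarith
  have h4 : 16 * ε * (1 - q) ≤ (Finset.univ.filter P).card * (16 * ε / Fintype.card G) := by
    rw [mul_div_assoc', le_div_iff₀ hG]
    nlinarith
  linarith

lemma wt_sum {G : Type*} [Fintype G] [Nonempty G] (ε : ℝ) (hε0 : 0 < ε) (hε : ε ≤ 1 / 16) :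
    ∑ i : Option (G × Bool), wt ε i = 1 := by
  rw [Fintype.sum_option]
  have hG : (0:ℝ) < Fintype.card G := by exact_mod_cast Fintype.card_pos
  simp only [wt, Finset.sum_const, Finset.card_univ, Fintype.card_prod, Fintype.card_bool]
  rw [nsmul_eq_mul, ← ENNReal.ofReal_natCast, ← ENNReal.ofReal_mul (by positivity),
    ← ENNReal.ofReal_add (by linarith) (by positivity), ← ENNReal.ofReal_one]
  congr 1
  push_cast
  field_simp
  ring

lemma core_atk {X G Ω : Type*} [MeasurableSpace X] [MeasurableSingletonClass X] [Fintype G]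
    [MeasurableSpace Ω] (μ : Measure Ω) [IsProbabilityMeasure μ]
    (a : Multiset (X × Bool) → Ω → X → Bool) (ε : ℝ)
    (f : X) (x : G × Bool → X) (h : X → Bool) (hinj : Function.Injective x)
    (hx : ∀ z, h (x z) = z.2) (S : Multiset (X × Bool))
    (adv : G → Multiset (X × Bool)) (hadv : ∀ A, ∀ p ∈ adv A, p.2 = h p.1) :
    ∑ z : G × Bool, wt (G := G) ε (some z) * μ {ω | a (S + adv z.1) ω (x z) ≠ z.2} ≤
      atkRand (dmeas (wt (G := G) ε) (exm f x)) μ h S a := by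
  unfold atkRand
  refine le_iSup_of_le ⟨Function.extend x (fun z => adv z.1) (fun _ => 0), ?_⟩ ?_
  · intro u p hp
    by_cases hu : ∃ z, x z = u
    · obtain ⟨z, rfl⟩ := hu
      rw [hinj.extend_apply] at hp
      exact hadv _ p hp
    · rw [Function.extend_apply' _ _ _ hu] at hp
      simp at hp
  · refine le_trans ?_ (dmeas_prod μ _ _ _)
    rw [Fintype.sum_option]
    refine le_trans ?_ le_add_self
    refine Finset.sum_le_sum fun z _ => ?_
    refine mul_le_mul' le_rfl (measure_mono ?_)
    intro ω hω
    change a (S + Function.extend x (fun z => adv z.1) (fun _ => 0) (x z)) ω (x z) ≠ h (x z)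
    rw [hinj.extend_apply, hx]
    exact hω

lemma pair_sum {Sg Ω X : Type*} [Fintype Sg] [MeasurableSpace Ω] (μ : Measure Ω)
    [IsProbabilityMeasure μ] (b : Sg → Ω → X → Bool) (x : Sg → Bool → X) (fl : Sg → Sg)
    (hfl : ∀ σ, fl (fl σ) = σ) (hb : ∀ σ, b (fl σ) = b σ) (hx : ∀ σ y, x (fl σ) y = x σ (!y)) :
    (Fintype.card Sg : ℝ≥0∞) ≤ ∑ σ, ∑ y : Bool, μ {ω | b σ ω (x σ y) ≠ y} := by
  have h1 : ∑ σ, μ {ω | b σ ω (x σ false) ≠ false} =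
      ∑ σ, μ {ω | b σ ω (x σ true) ≠ false} := by
    rw [← Equiv.sum_comp (Function.Involutive.toPerm fl hfl)]
    simp [Function.Involutive.toPerm, hb, hx]
  simp only [Fintype.sum_bool]
  rw [Finset.sum_add_distrib, h1, ← Finset.sum_add_distrib]
  have : (Fintype.card Sg : ℝ≥0∞) = ∑ _σ : Sg, 1 := by simp
  rw [this]
  refine Finset.sum_le_sum fun σ _ => ?_
  calc (1:ℝ≥0∞) = μ Set.univ := measure_univ.symm
    _ ≤ μ ({ω | b σ ω (x σ true) ≠ true} ∪ {ω | b σ ω (x σ true) ≠ false}) := by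
        apply measure_mono
        intro ω _
        by_cases h : b σ ω (x σ true) = true
        · right; simp [h]
        · left; exact h
    _ ≤ _ := measure_union_le _ _

lemma core_s7 {X G Sg Ω : Type*} [MeasurableSpace X] [MeasurableSingletonClass X] [Fintype G]
    [Nonempty G] [Fintype Sg] [Nonempty Sg]
    [MeasurableSpace Ω] (μ : Measure Ω) [IsProbabilityMeasure μ]
    (a : Multiset (X × Bool) → Ω → X → Bool) (ε : ℝ) (hε0 : 0 < ε) (hε : ε ≤ 1 / 16)
    (f : X) (x : Sg → G × Bool → X) (h : Sg → X → Bool) (hinj : ∀ σ, Function.Injective (x σ))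
    (hx : ∀ σ z, h σ (x σ z) = z.2) (hf : ∀ σ, h σ f = true)
    (fl : G → Sg → Sg) (hfl : ∀ A σ, fl A (fl A σ) = σ)
    (hxfl : ∀ A σ y, x (fl A σ) (A, y) = x σ (A, !y))
    (ok : G → G → Prop) [∀ A, DecidablePred (ok A)]
    (hok : ∀ A A' σ y, ok A A' → h σ (x (fl A σ) (A', y)) = y)
    (q : ℝ) (hq : ∀ A, (Fintype.card {A' // ¬ ok A A'} : ℝ) ≤ q * Fintype.card G)
    (hq0 : 0 ≤ q) (hq1 : q ≤ 1)
    (M : ℕ) (hM : M * (16 * ε * q) ≤ 1 / 12) :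
    ∃ σ, ENNReal.ofReal ε < Eatk μ (h σ) a (wt (G := G) ε) (exm f (x σ)) M := by
  classical
  set c : ℝ≥0∞ := ENNReal.ofReal (8 * ε / Fintype.card G) with hc
  have hG : (0:ℝ) < Fintype.card G := by exact_mod_cast Fintype.card_pos
  let ok' : G → Option (G × Bool) → Prop := fun A i => ∀ z, i = some z → ok A z.1
  let tr : Sg → (Fin M → Option (G × Bool)) → Multiset (X × Bool) :=
    fun σ ι => toTrain fun j => exm f (x σ) (ι j)
  -- single sigma bound
  have h1 : ∀ σ, ∑ ι : Fin M → Option (G × Bool), (∏ j, wt (G := G) ε (ι j)) *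
      ∑ A : G, ∑ y : Bool, c * ((if ∀ j, ok' A (ι j) then 1 else 0) *
        μ {ω | a (tr σ ι + tr (fl A σ) ι) ω (x σ (A, y)) ≠ y}) ≤
      Eatk μ (h σ) a (wt (G := G) ε) (exm f (x σ)) M := by
    intro σ
    unfold Eatk
    refine Finset.sum_le_sum fun ι _ => ?_
    gcongr
    refine le_trans ?_ (core_atk μ a ε f (x σ) (h σ) (hinj σ) (hx σ) _
      (fun A => if ∀ j, ok' A (ι j) then tr (fl A σ) ι else 0) ?_)
    · rw [Fintype.sum_prod_type]
      refine Finset.sum_le_sum fun A _ => Finset.sum_le_sum fun y _ => ?_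
      rw [hc]
      simp only [wt]
      gcongr
      split_ifs
      · rw [one_mul]
      · simp
    · intro A p hp
      split_ifs at hp with hA
      · simp only [tr, toTrain, Multiset.mem_coe, List.mem_ofFn] at hp
        obtain ⟨j, rfl⟩ := hp
        have := hA j
        rcases hi : ι j with _ | ⟨A', y⟩
        · simp [exm, hf]
        · simp only [exm]
          exact (hok A A' σ y (this _ hi)).symm
      · simp at hp
  have h2 : (Fintype.card Sg : ℝ≥0∞) * (ENNReal.ofReal (8 * ε) * ENNReal.ofReal (11 / 12)) ≤
      ∑ σ, Eatk μ (h σ) a (wt (G := G) ε) (exm f (x σ)) M := by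
    refine le_trans ?_ (Finset.sum_le_sum fun σ _ => h1 σ)
    rw [Finset.sum_comm]
    have h3 : ∀ ι : Fin M → Option (G × Bool), (∏ j, wt (G := G) ε (ι j)) *
        ∑ A : G, c * ((if ∀ j, ok' A (ι j) then 1 else 0) * (Fintype.card Sg : ℝ≥0∞)) ≤
        ∑ σ, (∏ j, wt (G := G) ε (ι j)) *
      ∑ A : G, ∑ y : Bool, c * ((if ∀ j, ok' A (ι j) then 1 else 0) *
        μ {ω | a (tr σ ι + tr (fl A σ) ι) ω (x σ (A, y)) ≠ y}) := by
      intro ι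
      refine le_trans ?_ (Finset.mul_sum _ _ _).le
      refine mul_le_mul' le_rfl ?_
      rw [Finset.sum_comm]
      refine Finset.sum_le_sum fun A _ => ?_
      simp only [← Finset.mul_sum]
      refine mul_le_mul' le_rfl (mul_le_mul' le_rfl ?_)
      refine pair_sum μ (fun σ => a (tr σ ι + tr (fl A σ) ι)) (fun σ y => x σ (A, y)) (fl A)
        (hfl A) ?_ ?_
      · intro σ
        simp only [hfl]
        rw [add_comm]
      · intro σ y
        exact hxfl A σ y
    refine le_trans ?_ (Finset.sum_le_sum fun ι _ => h3 ι)
    have h4 : ∀ A : G, ENNReal.ofReal (11 / 12) ≤ ∑ ι : Fin M → Option (G × Bool),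
        (∏ j, wt (G := G) ε (ι j)) * (if ∀ j, ok' A (ι j) then 1 else 0) := by
      intro A
      have e1 : ∀ ι : Fin M → Option (G × Bool),
          (∏ j, wt (G := G) ε (ι j)) * (if ∀ j, ok' A (ι j) then (1:ℝ≥0∞) else 0) =
          ∏ j, (wt (G := G) ε (ι j) * (match ι j with | none => 1 | some z => if ok A z.1 then 1 else 0)) := by
        intro ι
        rw [Finset.prod_mul_distrib]
        congr 1
        split_ifs with hA
        · symm
          apply Finset.prod_eq_one
          intro j _
          rcases hi : ι j with _ | z
          · rfl
          · simp [hA j z hi]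
        · push Not at hA
          obtain ⟨j, hj⟩ := hA
          symm
          apply Finset.prod_eq_zero (Finset.mem_univ j)
          rcases hi : ι j with _ | z
          · exfalso; apply hj; intro z hz; simp [hi] at hz
          · have : ¬ ok A z.1 := by
              intro h; apply hj; intro z' hz'; rw [hi] at hz'; cases hz'; exact h
            simp [this]
      simp only [e1]
      have e2 := Finset.prod_univ_sum (fun _ : Fin M => (Finset.univ : Finset (Option (G × Bool))))
        (fun _ i => (wt (G := G) ε i * (match i with | none => 1 | some z => if ok A z.1 then 1 else 0)))
      rw [Fintype.piFinset_univ] at e2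
      rw [← e2, Finset.prod_const, Finset.card_univ, Fintype.card_fin]
      refine le_trans ?_ (pow_le_pow_left' (wt_ok ε hε0 hε (ok A) q (hq A)) M)
      have hpq : 16 * ε * q ≤ 1 := by nlinarith
      rw [← ENNReal.ofReal_pow (by linarith)]
      apply ENNReal.ofReal_le_ofReal
      have := one_add_mul_le_pow (a := -(16 * ε * q)) (by linarith) M
      have e3 : 1 + -(16 * ε * q) = 1 - 16 * ε * q := by ring
      rw [e3] at this
      linarith
    calc (Fintype.card Sg : ℝ≥0∞) * (ENNReal.ofReal (8 * ε) * ENNReal.ofReal (11 / 12))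
        = ∑ A : G, c * Fintype.card Sg * ENNReal.ofReal (11 / 12) := by
          rw [Finset.sum_const, Finset.card_univ, nsmul_eq_mul]
          have : ENNReal.ofReal (8 * ε) = Fintype.card G * c := by
            rw [hc, ← ENNReal.ofReal_natCast, ← ENNReal.ofReal_mul (by positivity)]
            congr 1; field_simp
          rw [this]; ring
      _ ≤ ∑ A : G, c * Fintype.card Sg * ∑ ι : Fin M → Option (G × Bool),
        (∏ j, wt (G := G) ε (ι j)) * (if ∀ j, ok' A (ι j) then 1 else 0) := by
          refine Finset.sum_le_sum fun A _ => ?_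
          gcongr
          exact h4 A
      _ = _ := by
          simp only [Finset.mul_sum]
          rw [Finset.sum_comm]
          refine Finset.sum_congr rfl fun ι _ => Finset.sum_congr rfl fun A _ => ?_
          ring
  by_contra! hcon
  have h5 := h2.trans (Finset.sum_le_sum fun σ _ => hcon σ)
  rw [Finset.sum_const, Finset.card_univ, nsmul_eq_mul] at h5
  rw [← ENNReal.ofReal_natCast, ← ENNReal.ofReal_mul (by positivity),
    ← ENNReal.ofReal_mul (by positivity), ← ENNReal.ofReal_mul (by positivity),
    ENNReal.ofReal_le_ofReal_iff (by positivity)] at h5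
  have hS : (0:ℝ) < Fintype.card Sg := by exact_mod_cast Fintype.card_pos
  have := le_of_mul_le_mul_left h5 hS
  linarith

lemma sg_mul_self (b : Bool) : sg b * sg b = 1 := by cases b <;> simp [sg]

def flp {s : ℕ} (A : Fin s → Fin 16) (σ : Fin s × Fin 16 → Bool) : Fin s × Fin 16 → Bool :=
  fun p => if A p.1 = p.2 then !(σ p) else σ p

lemma flp_flp {s : ℕ} (A : Fin s → Fin 16) (σ : Fin s × Fin 16 → Bool) : flp A (flp A σ) = σ := by
  funext p
  unfold flp
  split_ifs <;> simp

def okk {s : ℕ} (A A' : Fin s → Fin 16) : Prop :=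
  2 * (Finset.univ.filter fun i => A i = A' i).card < s

lemma bad_count {s : ℕ} (A : Fin s → Fin 16) [DecidablePred (okk A)] :
    (Fintype.card {A' // ¬ okk A A'} : ℝ) ≤ (1 / 2) ^ s * Fintype.card (Fin s → Fin 16) := by
  have h1 : ∑ A' : Fin s → Fin 16, ∏ i, (if A i = A' i then (16:ℝ) else 1) = 31 ^ s := by
    have e2 := Finset.prod_univ_sum (fun _ : Fin s => (Finset.univ : Finset (Fin 16)))
        (fun i b => if A i = b then (16:ℝ) else 1)
    rw [Fintype.piFinset_univ] at e2
    rw [← e2]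
    have : ∀ i : Fin s, ∑ b : Fin 16, (if A i = b then (16:ℝ) else 1) = 31 := by
      intro i
      have : ∀ b : Fin 16, (if A i = b then (16:ℝ) else 1) = (if A i = b then (15:ℝ) else 0) + 1 := by
        intro b; split_ifs <;> norm_num
      simp only [this, Finset.sum_add_distrib, Finset.sum_ite_eq]
      simp; norm_num
    simp [this]
  have h2 : ∀ A' : Fin s → Fin 16, (if ¬ okk A A' then (4:ℝ) ^ s else 0) ≤
      ∏ i, (if A i = A' i then (16:ℝ) else 1) := by
    intro A'
    rw [Finset.prod_ite, Finset.prod_const, Finset.prod_const_one, mul_one]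
    by_cases h : okk A A'
    · rw [if_neg (not_not.2 h)]; positivity
    · rw [if_pos h]
      unfold okk at h
      rw [not_lt] at h
      calc (4:ℝ) ^ s ≤ 4 ^ (2 * (Finset.univ.filter fun i => A i = A' i).card) :=
            pow_le_pow_right₀ (by norm_num) h
        _ = _ := by rw [pow_mul]; norm_num
  have h3 := Finset.sum_le_sum fun A' (_ : A' ∈ Finset.univ) => h2 A'
  rw [h1, ← Finset.sum_filter, Finset.sum_const, nsmul_eq_mul] at h3
  rw [Fintype.card_subtype]
  have h4 : (31:ℝ) ^ s ≤ 32 ^ s := pow_le_pow_left₀ (by norm_num) (by norm_num) s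
  have h5 : (32:ℝ) ^ s = (1/2) ^ s * 16 ^ s * 4 ^ s := by
    rw [← mul_pow, ← mul_pow]; norm_num
  have h6 : ((Fintype.card (Fin s → Fin 16) : ℕ) : ℝ) = 16 ^ s := by simp
  rw [h6]
  have h7 : (0:ℝ) < 4 ^ s := by positivity
  exact le_of_mul_le_mul_right (by linarith) h7

section geo
variable {n s : ℕ}

noncomputable def vc (v : Option (Fin s × Fin 16) → EuclideanSpace ℝ (Fin n))
    (c : Option (Fin s × Fin 16) → ℝ) : EuclideanSpace ℝ (Fin n) := ∑ o, c o • v o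

lemma vc_inner {v : Option (Fin s × Fin 16) → EuclideanSpace ℝ (Fin n)} (hv : Orthonormal ℝ v)
    (c d : Option (Fin s × Fin 16) → ℝ) : ⟪vc v c, vc v d⟫ = ∑ o, c o * d o := by
  unfold vc
  rw [hv.inner_sum]
  simp

noncomputable def cw (r : ℝ) (σ : Fin s × Fin 16 → Bool) : Option (Fin s × Fin 16) → ℝ
  | none => 1
  | some p => sg (σ p) * r

noncomputable def cf : Option (Fin s × Fin 16) → ℝ
  | none => 1
  | some _ => 0

noncomputable def cx (r : ℝ) (σ : Fin s × Fin 16 → Bool) (z : (Fin s → Fin 16) × Bool) :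
    Option (Fin s × Fin 16) → ℝ
  | none => 0
  | some p => if z.1 p.1 = p.2 then sg z.2 * sg (σ p) * r else 0

lemma sum_cw_cw (r : ℝ) (hr : s * r ^ 2 = 1) (σ : Fin s × Fin 16 → Bool) :
    ∑ o, cw r σ o * cw r σ o = 17 := by
  rw [Fintype.sum_option]
  have : ∀ p, cw r σ (some p) * cw r σ (some p) = r ^ 2 := by
    intro p
    simp only [cw]
    linear_combination r ^ 2 * sg_mul_self (σ p)
  simp only [this]
  simp [cw]
  linarith

lemma sum_cw_cf (r : ℝ) (σ : Fin s × Fin 16 → Bool) :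
    ∑ o, cw r σ o * cf o = 1 := by
  rw [Fintype.sum_option]; simp [cw, cf]

lemma sum_cf_cf : ∑ o, (cf : Option (Fin s × Fin 16) → ℝ) o * cf o = 1 := by
  rw [Fintype.sum_option]; simp [cf]

lemma sum_cx_cx (r : ℝ) (hr : s * r ^ 2 = 1) (σ : Fin s × Fin 16 → Bool)
    (z : (Fin s → Fin 16) × Bool) :
    ∑ o, cx r σ z o * cx r σ z o = 1 := by
  rw [Fintype.sum_option, Fintype.sum_prod_type]
  have : ∀ i, ∀ b, cx r σ z (some (i, b)) * cx r σ z (some (i, b)) =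
      if z.1 i = b then r ^ 2 else 0 := by
    intro i b
    simp only [cx]
    split_ifs
    · linear_combination r ^ 2 * sg z.2 ^ 2 * sg_mul_self (σ (i, b)) + r ^ 2 * sg_mul_self z.2
    · simp
  simp only [this, Finset.sum_ite_eq]
  simp [cx]
  linarith

lemma sum_cw_cx (r : ℝ) (hr : s * r ^ 2 = 1) (σ : Fin s × Fin 16 → Bool)
    (z : (Fin s → Fin 16) × Bool) :
    ∑ o, cw r σ o * cx r σ z o = sg z.2 := by
  rw [Fintype.sum_option, Fintype.sum_prod_type]
  have : ∀ i, ∀ b, cw r σ (some (i, b)) * cx r σ z (some (i, b)) =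
      if z.1 i = b then sg z.2 * r ^ 2 else 0 := by
    intro i b
    simp only [cx, cw]
    split_ifs
    · linear_combination r ^ 2 * sg z.2 * sg_mul_self (σ (i, b))
    · simp
  simp only [this, Finset.sum_ite_eq]
  simp [cx]
  linear_combination sg z.2 * hr

lemma sum_cw_cx_flp (r : ℝ) (hr : s * r ^ 2 = 1) (σ : Fin s × Fin 16 → Bool)
    (A A' : Fin s → Fin 16) (y : Bool) (h : okk A A') :
    ∃ t : ℝ, 0 < t ∧ ∑ o, cw r σ o * cx r (flp A σ) (A', y) o = sg y * t := by
  refine ⟨r ^ 2 * (s - 2 * (Finset.univ.filter fun i => A i = A' i).card), ?_, ?_⟩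
  · apply _root_.mul_pos
    · by_contra hc
      have : r ^ 2 = 0 := le_antisymm (not_lt.1 hc) (sq_nonneg r)
      rw [this] at hr; simp at hr
    · have : (2 * (Finset.univ.filter fun i => A i = A' i).card : ℝ) < s := by exact_mod_cast h
      linarith
  rw [Fintype.sum_option, Fintype.sum_prod_type]
  have : ∀ i, ∀ b, cw r σ (some (i, b)) * cx r (flp A σ) (A', y) (some (i, b)) =
      if A' i = b then sg y * r ^ 2 * (1 - if A i = A' i then 2 else 0) else 0 := by
    intro i b
    simp only [cx, cw, flp]
    by_cases h1 : A' i = b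
    · subst h1
      by_cases h2 : A i = A' i
      · simp only [h2, if_true, sg_not]
        linear_combination - r ^ 2 * sg y * sg_mul_self (σ (i, A' i))
      · simp only [h2, if_true, if_false]
        linear_combination r ^ 2 * sg y * sg_mul_self (σ (i, A' i))
    · simp [h1]
  simp only [this, Finset.sum_ite_eq, Finset.mem_univ, if_true, ← Finset.mul_sum,
    Finset.sum_sub_distrib, ← Finset.sum_filter, Finset.sum_const, nsmul_eq_mul]
  simp [cx]
  ring

lemma cx_flp (r : ℝ) (σ : Fin s × Fin 16 → Bool) (A : Fin s → Fin 16) (y : Bool) :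
    cx r (flp A σ) (A, y) = cx r σ (A, !y) := by
  funext o
  rcases o with _ | p
  · rfl
  · simp only [cx, flp]
    split_ifs
    · simp only [sg_not]; ring
    · rfl

lemma vc_inj {v : Option (Fin s × Fin 16) → EuclideanSpace ℝ (Fin n)} (hv : Orthonormal ℝ v) :
    Function.Injective (vc v) := by
  intro c d hcd
  funext o
  have h := congrArg (fun u => ⟪v o, u⟫) hcd
  simp only [vc, hv.inner_right_fintype] at h
  exact h

lemma cx_inj (r : ℝ) (hr : s * r ^ 2 = 1) (σ : Fin s × Fin 16 → Bool) :
    Function.Injective (cx r σ) := by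
  rintro ⟨A, y⟩ ⟨A', y'⟩ h
  have hr0 : r ≠ 0 := by rintro rfl; simp at hr
  have hs0 : ∀ b, sg b ≠ 0 := by intro b; cases b <;> simp [sg]
  have hs : s ≠ 0 := by rintro rfl; simp at hr
  have hA : A = A' := by
    funext i
    have := congrFun h (some (i, A i))
    simp only [cx, if_true] at this
    by_contra hc
    rw [if_neg (fun h => hc h.symm)] at this
    exact mul_ne_zero (mul_ne_zero (hs0 _) (hs0 _)) hr0 this
  subst hA
  have h1 := sum_cw_cx r hr σ (A, y)
  rw [h, sum_cw_cx r hr σ] at h1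
  have : y = y' := by
    revert h1
    cases y <;> cases y' <;> simp [sg] <;> norm_num
  rw [this]

end geo

lemma dmeas_support {α I : Type*} [TopologicalSpace α] [T1Space α] [MeasurableSpace α]
    [MeasurableSingletonClass α] [Fintype I]
    (ν : I → ℝ≥0∞) (e : I → α) (p : α) (hp : p ∈ msupport (dmeas ν e)) : ∃ i, e i = p := by
  by_contra hc
  have := hp (Set.range e)ᶜ (Set.finite_range e).isClosed.isOpen_compl (by simpa using hc)
  rw [dmeas_apply] at this
  simp at this

lemma sg_pos_iff (y : Bool) (t : ℝ) (ht : 0 < t) : decide (0 ≤ sg y * t) = y := by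
  cases y <;> simp [sg] <;> linarith

/-- Lower bound for robust learning of linear classifiers with margin `1/8` in dimension
`n > 256`: every learner has expected attackable rate `> ε` whenever
`m ≤ e^{(n-1)/128}/(192 ε)`. -/
theorem stmt7 (n : ℕ) (hn : 256 < n) (ε : ℝ) (hε0 : 0 < ε) (hε : ε ≤ 1 / 16)
    (Ω : Type*) (mΩ : MeasurableSpace Ω) (μ : Measure Ω) (hμ : IsProbabilityMeasure μ)
    (a : Multiset (Ball98 n × Bool) → Ω → Ball98 n → Bool) :
    ∃ (w : EuclideanSpace ℝ (Fin n)) (b : ℝ), w ≠ 0 ∧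
    ∃ D : Measure (Ball98 n × Bool), IsProbabilityMeasure D ∧
      D {p : Ball98 n × Bool | p.2 = decide (0 ≤ ⟪w, p.1.1⟫ + b)} = 1 ∧
      (∀ p ∈ msupport D,
        (1 / 8 : ℝ) * ‖w‖ / 2 ≤ (if p.2 then (1 : ℝ) else -1) * (⟪w, p.1.1⟫ + b)) ∧
      ∀ m : ℕ, (m : ℝ) ≤ Real.exp ((n - 1) / 128) / (192 * ε) →
        ENNReal.ofReal ε <
          ∫⁻ f, atkRand D μ (fun x => decide (0 ≤ ⟪w, x.1⟫ + b)) (toTrain f) a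
            ∂(samples D m) := by
    classical
  obtain ⟨s, hs⟩ : ∃ s, s = (n - 1) / 16 := ⟨_, rfl⟩
  have hs16 : 16 ≤ s := by omega
  have hsn : s * 16 + 1 ≤ n := by omega
  have hns : n - 1 ≤ 17 * s := by omega
  have hspos : (0:ℝ) < s := by exact_mod_cast (by omega : 0 < s)
  obtain ⟨v, hv⟩ : ∃ v : Option (Fin s × Fin 16) → EuclideanSpace ℝ (Fin n), Orthonormal ℝ v := by
    have : Fintype.card (Option (Fin s × Fin 16)) ≤ Fintype.card (Fin n) := by simpa using hsn
    obtain ⟨em⟩ := Function.Embedding.nonempty_of_card_le this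
    exact ⟨_, (EuclideanSpace.basisFun (Fin n) ℝ).orthonormal.comp em em.injective⟩
  obtain ⟨r, hr⟩ : ∃ r : ℝ, s * r ^ 2 = 1 := by
    refine ⟨√(1 / s), ?_⟩
    rw [Real.sq_sqrt (by positivity)]
    field_simp
  have hnorm : ∀ c : Option (Fin s × Fin 16) → ℝ, ∑ o, c o * c o = 1 → ‖vc v c‖ ≤ 9 / 8 := by
    intro c hc
    have h1 := vc_inner hv c c
    rw [hc, real_inner_self_eq_norm_sq] at h1
    nlinarith [norm_nonneg (vc v c)]
  let f : Ball98 n := ⟨vc v cf, hnorm _ sum_cf_cf⟩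
  let x : (Fin s × Fin 16 → Bool) → (Fin s → Fin 16) × Bool → Ball98 n :=
    fun σ z => ⟨vc v (cx r σ z), hnorm _ (sum_cx_cx r hr σ z)⟩
  let w : (Fin s × Fin 16 → Bool) → EuclideanSpace ℝ (Fin n) := fun σ => vc v (cw r σ)
  let h : (Fin s × Fin 16 → Bool) → Ball98 n → Bool := fun σ u => decide (0 ≤ ⟪w σ, u.1⟫ + 0)
  have hwf : ∀ σ, ⟪w σ, f.1⟫ = 1 := by
    intro σ
    simp only [w, f]
    rw [vc_inner hv, sum_cw_cf]
  have hwx : ∀ σ z, ⟪w σ, (x σ z).1⟫ = sg z.2 := by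
    intro σ z
    simp only [w, x]
    rw [vc_inner hv, sum_cw_cx r hr]
  have hwn : ∀ σ, ‖w σ‖ ^ 2 = 17 := by
    intro σ
    rw [← real_inner_self_eq_norm_sq]
    simp only [w]
    rw [vc_inner hv, sum_cw_cw r hr]
  have hf : ∀ σ, h σ f = true := by
    intro σ
    simp [h, hwf]
  have hx : ∀ σ z, h σ (x σ z) = z.2 := by
    intro σ z
    have := sg_pos_iff z.2 1 one_pos
    simpa [h, hwx] using this
  obtain ⟨M, hM⟩ : ∃ M : ℕ, M = ⌊Real.exp ((n - 1) / 128) / (192 * ε)⌋₊ := ⟨_, rfl⟩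
  have hMq : (M:ℝ) * (16 * ε * (1 / 2) ^ s) ≤ 1 / 12 := by
    have h1 : (M:ℝ) ≤ Real.exp ((n - 1) / 128) / (192 * ε) := by
      rw [hM]; exact Nat.floor_le (by positivity)
    have h2 : Real.exp (((n:ℝ) - 1) / 128) ≤ 2 ^ s := by
      have h3 : ((n:ℝ) - 1) ≤ 17 * s := by
        have : n ≤ 17 * s + 1 := by omega
        have : (n:ℝ) ≤ 17 * s + 1 := by exact_mod_cast this
        linarith
      have h4 : ((n:ℝ) - 1) / 128 ≤ s * Real.log 2 := by
        have := Real.log_two_gt_d9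
        nlinarith
      calc _ ≤ Real.exp (s * Real.log 2) := Real.exp_le_exp.2 h4
        _ = _ := by rw [Real.exp_nat_mul, Real.exp_log two_pos]
    calc (M:ℝ) * (16 * ε * (1 / 2) ^ s)
        ≤ (2 ^ s / (192 * ε)) * (16 * ε * (1 / 2) ^ s) := by
          gcongr
          exact h1.trans (by gcongr)
      _ = (2 * (1 / 2)) ^ s / 12 := by
          rw [mul_pow]; field_simp; norm_num
      _ ≤ 1 / 12 := by norm_num
  have : Nonempty (Fin s → Fin 16) := ⟨fun _ => 0⟩
  obtain ⟨σ, hσ⟩ := core_s7 (G := Fin s → Fin 16) (Sg := Fin s × Fin 16 → Bool) μ a ε hε0 hε f x h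
    (fun σ z z' hz => cx_inj r hr σ (vc_inj hv (congrArg Subtype.val hz))) hx hf flp flp_flp
    (fun A σ y => Subtype.ext (congrArg (vc v) (cx_flp r σ A y))) okk
    (by
      intro A A' σ y hA
      obtain ⟨t, ht, he⟩ := sum_cw_cx_flp r hr σ A A' y hA
      simp only [h, w, x, add_zero]
      rw [vc_inner hv, he]
      exact sg_pos_iff y t ht)
    ((1 / 2) ^ s) (fun A => bad_count A) (by positivity) (pow_le_one₀ (by norm_num) (by norm_num))
    M hMq
  have hsum := wt_sum (G := Fin s → Fin 16) ε hε0 hε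
  have hclean : ∀ i, (exm f (x σ) i).2 = h σ (exm f (x σ) i).1 := by
    intro i
    rcases i with _ | z
    · simp [exm, hf]
    · simp [exm, hx]
  refine ⟨w σ, 0, ?_, dmeas (wt ε) (exm f (x σ)), dmeas_prob _ _ hsum, ?_, ?_, ?_⟩
  · intro h0
    have := hwn σ
    rw [h0] at this
    simp at this
  · rw [dmeas_apply, ← hsum]
    refine Finset.sum_congr rfl fun i _ => ?_
    rw [Set.indicator_of_mem]
    · simp
    · exact hclean i
  · intro p hp
    obtain ⟨i, rfl⟩ := dmeas_support _ _ _ hp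
    have h8 : ‖w σ‖ ≤ 16 := by nlinarith [hwn σ, norm_nonneg (w σ)]
    have h9 : (if (exm f (x σ) i).2 then (1:ℝ) else -1) * (⟪w σ, (exm f (x σ) i).1.1⟫ + 0) = 1 := by
      rcases i with _ | z
      · simp [exm, hwf]
      · simp only [exm, hwx, add_zero]
        exact sg_mul_self z.2
    rw [h9]
    linarith
  · intro m hm
    rw [Eatk_eq _ _ _ _ _ hsum]
    refine lt_of_lt_of_le hσ (Eatk_anti μ (h σ) a _ _ hsum hclean ?_)
    rw [hM]
    exact Nat.le_floor hm
end

section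
/- For k ≥ 1 let H_k be the hypothesis class on X = [0,1] consisting of indicators of unions of at most k open subintervals, i.e., H_k = ⋃_{k'≤k} { 1[⋃_{i=1}^{k'} (a_i,b_i)] : 0 ≤ a_i < b_i ≤ 1 for all i ∈ [k'] } ∪ {the all-zero function}. There exist a universal constant C > 0 and a deterministic learning algorithm A (not depending on k) such that for every k ≥ 1, all ε, δ ∈ (0,1), every target h* ∈ H_k, and every distribution D over D_{h*}: if m ≥ C·( k·log(1/ε) + log(1/δ) )/ε, then with probability at least 1−δ over S_trn ~ D^m, atk_D(h*, S_trn, A) ≤ ε. -/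
open MeasureTheory ENNReal

/-- The unit interval `[0,1]` as an instance space. -/
abbrev UnitI : Type := (Set.Icc (0 : ℝ) 1)

/-- The class of indicators of unions of at most `k` open subintervals of `[0,1]`
(taking `k' = 0` intervals yields the all-zero function). -/
def Hunion (k : ℕ) : Set (UnitI → Bool) :=
  {h | ∃ k' : ℕ, k' ≤ k ∧ ∃ a b : Fin k' → ℝ,
    (∀ i, 0 ≤ a i ∧ a i < b i ∧ b i ≤ 1) ∧
    ∀ x : UnitI, h x = decide (∃ i, a i < (x : ℝ) ∧ (x : ℝ) < b i)}


namespace Cells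

/-- points not covered by a single example -/
def W1 (c : UnitI → ℕ) (y : UnitI) : Set UnitI := {x | ¬ (c y = c x ∧ y ≤ x)}

def WF (c : UnitI → ℕ) {m : ℕ} (f : Fin m → UnitI × Bool) : Set UnitI :=
  {x | ∀ i, x ∈ W1 c (f i).1}

lemma meas_joint {c : UnitI → ℕ} (hc : Measurable c) :
    MeasurableSet {q : UnitI × UnitI | q.2 ∈ W1 c q.1} := by
  unfold W1
  refine MeasurableSet.compl (MeasurableSet.inter (s₁ := {q : UnitI × UnitI | c q.1 = c q.2})
    (s₂ := {q : UnitI × UnitI | q.1 ≤ q.2}) ?_ ?_)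
  · exact measurableSet_eq_fun (hc.comp measurable_fst) (hc.comp measurable_snd)
  · exact measurableSet_le measurable_fst measurable_snd

lemma meas_W1 {c : UnitI → ℕ} (hc : Measurable c) (y : UnitI) : MeasurableSet (W1 c y) :=
  measurable_prodMk_left (meas_joint hc)

lemma meas_event {c : UnitI → ℕ} (hc : Measurable c) (μ : Measure UnitI) [IsProbabilityMeasure μ]
    {W : Set UnitI} (hW : MeasurableSet W) (m : ℕ) (t : ℝ≥0∞) :
    MeasurableSet {f : Fin m → UnitI × Bool | t < μ (W ∩ WF c f)} := by
  have h : MeasurableSet {q : (Fin m → UnitI × Bool) × UnitI | q.2 ∈ W ∩ WF c q.1} := by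
    have h1 : MeasurableSet {q : (Fin m → UnitI × Bool) × UnitI | q.2 ∈ W} :=
      measurable_snd hW
    have h2 : MeasurableSet {q : (Fin m → UnitI × Bool) × UnitI | ∀ i, q.2 ∈ W1 c (q.1 i).1} := by
      rw [Set.ofPred_forall]
      refine MeasurableSet.iInter fun i => ?_
      have hm : Measurable fun q : (Fin m → UnitI × Bool) × UnitI => ((q.1 i).1, q.2) := by
        fun_prop
      exact hm (meas_joint hc)
    exact h1.inter h2
  have := measurable_measure_prodMk_left (ν := μ) h
  exact measurableSet_lt measurable_const this

/-- mass of the set of points with light upper ray -/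
lemma ray (ν : Measure UnitI) [IsFiniteMeasure ν] (g : ℝ≥0∞) :
    MeasurableSet {x | ν (Set.Ici x) < g} ∧ ν {x | ν (Set.Ici x) < g} ≤ g := by
  have hup : IsUpperSet {x | ν (Set.Ici x) < g} := by
    intro x y hxy hx
    exact lt_of_le_of_lt (measure_mono (Set.Ici_subset_Ici.2 hxy)) hx
  have hm : MeasurableSet {x | ν (Set.Ici x) < g} := hup.ordConnected.measurableSet
  refine ⟨hm, ?_⟩
  rw [hm.measure_eq_iSup_isCompact]
  refine iSup_le fun K => iSup_le fun hK => iSup_le fun hKc => ?_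
  rcases K.eq_empty_or_nonempty with h | h
  · simp [h]
  · obtain ⟨a, ha⟩ := hKc.exists_isLeast h
    exact (measure_mono (fun x hx => ha.2 hx)).trans (hK ha.1).le

lemma pow_half (s : ℕ) (hs : 1 ≤ s) : (1 - 1 / (s : ℝ)) ^ s ≤ 1 / 2 := by
  have hs' : (0 : ℝ) < s := by exact_mod_cast hs
  have h0 : 0 ≤ 1 - 1 / (s : ℝ) := by
    have : 1 / (s : ℝ) ≤ 1 := by rw [div_le_one hs']; exact_mod_cast hs
    linarith
  have h1 : 1 - 1 / (s : ℝ) ≤ Real.exp (-(1 / (s : ℝ))) := by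
    have := Real.add_one_le_exp (-(1 / (s : ℝ))); linarith
  calc (1 - 1 / (s : ℝ)) ^ s ≤ Real.exp (-(1 / (s : ℝ))) ^ s := pow_le_pow_left₀ h0 h1 s
    _ = Real.exp (-1) := by
      rw [← Real.exp_nat_mul]; congr 1; field_simp
    _ ≤ 1 / 2 := by
      rw [Real.exp_neg, one_div]
      apply inv_anti₀ (by norm_num)
      have := Real.add_one_le_exp (1 : ℝ); linarith

lemma step {c : UnitI → ℕ} (hc : Measurable c) (μ : Measure UnitI) [IsProbabilityMeasure μ]
    {N : ℕ} (hN : 1 ≤ N) (hcN : ∀ x, c x < N)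
    {W : Set UnitI} (hW : MeasurableSet W) {ε : ℝ} (hε : 0 < ε) (hu : ε < μ.real W) :
    ∫⁻ x, ENNReal.ofReal ((μ.real (W ∩ W1 c x) / ε) ^ (2 * N)) ∂μ ≤
      ENNReal.ofReal ((1 - ε / 4) * (μ.real W / ε) ^ (2 * N)) := by
  set u := μ.real W with hudef
  have hN' : (0 : ℝ) < N := by exact_mod_cast hN
  have hu0 : 0 < u := hε.trans hu
  have hu1 : u ≤ 1 := measureReal_le_one
  set g : ℝ := u / (2 * N) with hg
  have hg0 : 0 < g := by positivity
  let ν : ℕ → Measure UnitI := fun j => μ.restrict (W ∩ c ⁻¹' {j})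
  let B : ℕ → Set UnitI := fun j => {x | ν j (Set.Ici x) < ENNReal.ofReal g}
  have hcell : ∀ j, MeasurableSet (W ∩ c ⁻¹' {j}) := fun j =>
    hW.inter (hc (measurableSet_singleton j))
  have hB : ∀ j, MeasurableSet (B j) := fun j => (ray (ν j) _).1
  have hBm : ∀ j, μ.real (B j ∩ (W ∩ c ⁻¹' {j})) ≤ g := by
    intro j
    have := (ray (ν j) (ENNReal.ofReal g)).2
    change ν j (B j) ≤ _ at this
    rw [Measure.restrict_apply (hB j)] at this
    exact ENNReal.toReal_le_of_le_ofReal hg0.le this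
  let Bad : Set UnitI := ⋃ j ∈ Finset.range N, (B j ∩ (W ∩ c ⁻¹' {j}))
  have hBadM : MeasurableSet Bad :=
    Finset.measurableSet_biUnion _ fun j _ => (hB j).inter (hcell j)
  have hBad : μ.real Bad ≤ u / 2 := by
    calc μ.real Bad ≤ ∑ j ∈ Finset.range N, μ.real (B j ∩ (W ∩ c ⁻¹' {j})) :=
          measureReal_biUnion_finset_le _ _
      _ ≤ ∑ j ∈ Finset.range N, g := Finset.sum_le_sum fun j _ => hBm j
      _ = u / 2 := by simp [hg]; field_simp
  let G := W \ Bad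
  have hGM : MeasurableSet G := hW.diff hBadM
  have hGm : u / 2 ≤ μ.real G := by
    have : u ≤ μ.real G + μ.real Bad := by
      refine (measureReal_mono ?_).trans (measureReal_union_le G Bad)
      intro x hx
      by_cases h : x ∈ Bad
      · exact Or.inr h
      · exact Or.inl ⟨hx, h⟩
    linarith
  set b : ℝ := (u / ε) ^ (2 * N) with hb
  have hb0 : 0 ≤ b := by positivity
  have hpt : ∀ x, ENNReal.ofReal ((μ.real (W ∩ W1 c x) / ε) ^ (2 * N)) ≤
      G.indicator (fun _ => ENNReal.ofReal (b / 2)) x +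
      Gᶜ.indicator (fun _ => ENNReal.ofReal b) x := by
    intro x
    by_cases hx : x ∈ G
    · rw [Set.indicator_of_mem hx, Set.indicator_of_notMem (by simpa using hx), add_zero]
      apply ENNReal.ofReal_le_ofReal
      have hxB : x ∉ B (c x) := by
        intro h
        apply hx.2
        simp only [Bad, Set.mem_iUnion]
        exact ⟨c x, Finset.mem_range.2 (hcN x), h, hx.1, rfl⟩
      have h1 : ENNReal.ofReal g ≤ μ (Set.Ici x ∩ (W ∩ c ⁻¹' {c x})) := by
        have : ENNReal.ofReal g ≤ ν (c x) (Set.Ici x) := not_lt.1 hxB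
        rwa [Measure.restrict_apply measurableSet_Ici] at this
      have h2 : g ≤ μ.real (Set.Ici x ∩ (W ∩ c ⁻¹' {c x})) :=
        (ENNReal.ofReal_le_iff_le_toReal (measure_ne_top _ _)).1 h1
      have h3 : μ.real (W ∩ W1 c x) + μ.real (Set.Ici x ∩ (W ∩ c ⁻¹' {c x})) ≤ u := by
        rw [← measureReal_union _ (measurableSet_Ici.inter (hcell _))]
        · refine measureReal_mono (h₂ := measure_ne_top _ _) ?_
          rintro y (hy | hy)
          · exact hy.1
          · exact hy.2.1
        · rw [Set.disjoint_left]
          rintro y ⟨_, hy⟩ ⟨hy1, _, hy2⟩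
          exact hy ⟨hy2.symm, hy1⟩
      have h4 : μ.real (W ∩ W1 c x) / ε ≤ (u / ε) * (1 - 1 / ((2 * N : ℕ) : ℝ)) := by
        have : (u / ε) * (1 - 1 / ((2 * N : ℕ) : ℝ)) = (u - g) / ε := by
          rw [hg]; push_cast; field_simp
        rw [this]
        gcongr
        linarith
      calc (μ.real (W ∩ W1 c x) / ε) ^ (2 * N)
          ≤ ((u / ε) * (1 - 1 / ((2 * N : ℕ) : ℝ))) ^ (2 * N) :=
            pow_le_pow_left₀ (by positivity) h4 _
        _ = b * (1 - 1 / ((2 * N : ℕ) : ℝ)) ^ (2 * N) := by rw [mul_pow]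
        _ ≤ b * (1 / 2) := by
            gcongr
            exact pow_half _ (by omega)
        _ = b / 2 := by ring
    · rw [Set.indicator_of_notMem hx, Set.indicator_of_mem (by simpa using hx), zero_add]
      apply ENNReal.ofReal_le_ofReal
      apply pow_le_pow_left₀ (by positivity)
      gcongr
      exact measureReal_mono Set.inter_subset_left
  calc _ ≤ ∫⁻ x, (G.indicator (fun _ => ENNReal.ofReal (b / 2)) x +
      Gᶜ.indicator (fun _ => ENNReal.ofReal b) x) ∂μ := lintegral_mono hpt
    _ = ENNReal.ofReal (b / 2) * μ G + ENNReal.ofReal b * μ Gᶜ := by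
      rw [lintegral_add_left (measurable_const.indicator hGM),
        lintegral_indicator_const hGM, lintegral_indicator_const hGM.compl]
    _ = ENNReal.ofReal (b / 2 * μ.real G + b * (1 - μ.real G)) := by
      have hc1 : μ.real Gᶜ = 1 - μ.real G := probReal_compl_eq_one_sub hGM
      rw [← hc1, ENNReal.ofReal_add (by positivity) (by positivity),
        ENNReal.ofReal_mul (by positivity), ENNReal.ofReal_mul hb0, ofReal_measureReal,
        ofReal_measureReal]
    _ ≤ _ := by
      apply ENNReal.ofReal_le_ofReal
      nlinarith

lemma main_bound {c : UnitI → ℕ} (hc : Measurable c) (D : Measure (UnitI × Bool))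
    [IsProbabilityMeasure D] (μ : Measure UnitI) [IsProbabilityMeasure μ]
    (hμ : μ = D.map Prod.fst)
    {N : ℕ} (hN : 1 ≤ N) (hcN : ∀ x, c x < N) {ε : ℝ} (hε : 0 < ε) (hε1 : ε < 1) (m : ℕ) :
    ∀ W : Set UnitI, MeasurableSet W →
      samples D m {f | ENNReal.ofReal ε < μ (W ∩ WF c f)} ≤
        ENNReal.ofReal ((1 - ε / 4) ^ m * (μ.real W / ε) ^ (2 * N)) := by
  induction m with
  | zero =>
    intro W hW
    haveI : IsProbabilityMeasure (samples D 0) := by unfold samples; infer_instance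
    by_cases h : ENNReal.ofReal ε < μ W
    · refine prob_le_one.trans ?_
      rw [ENNReal.one_le_ofReal, pow_zero, one_mul]
      apply one_le_pow₀
      rw [one_le_div hε]
      exact ((ENNReal.ofReal_lt_iff_lt_toReal hε.le (measure_ne_top _ _)).1 h).le
    · have : {f : Fin 0 → UnitI × Bool | ENNReal.ofReal ε < μ (W ∩ WF c f)} = ∅ := by
        ext f
        simp only [Set.mem_setOf_eq, Set.mem_empty_iff_false, iff_false]
        intro h'
        exact h (h'.trans_le (measure_mono Set.inter_subset_left))
      rw [this]; simp
  | succ m ih =>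
    intro W hW
    by_cases h : ENNReal.ofReal ε < μ W
    swap
    · have : {f : Fin (m+1) → UnitI × Bool | ENNReal.ofReal ε < μ (W ∩ WF c f)} = ∅ := by
        ext f
        simp only [Set.mem_setOf_eq, Set.mem_empty_iff_false, iff_false]
        intro h'
        exact h (h'.trans_le (measure_mono Set.inter_subset_left))
      rw [this]; simp
    have hu := (ENNReal.ofReal_lt_iff_lt_toReal hε.le (measure_ne_top _ _)).1 h
    have hρ : 0 ≤ 1 - ε / 4 := by linarith
    haveI : IsProbabilityMeasure (samples D m) := by unfold samples; infer_instance
    have mp := (measurePreserving_piFinSuccAbove (fun _ : Fin (m+1) => D) 0).symm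
    have hE := meas_event hc μ hW (m+1) (ENNReal.ofReal ε)
    have e1 : samples D (m+1) {f | ENNReal.ofReal ε < μ (W ∩ WF c f)} =
        ∫⁻ p, samples D m {f | ENNReal.ofReal ε < μ ((W ∩ W1 c p.1) ∩ WF c f)} ∂D := by
      unfold samples
      rw [← mp.measure_preimage hE.nullMeasurableSet,
        Measure.prod_apply (mp.measurable hE)]
      refine lintegral_congr fun p => ?_
      congr 1
      ext f
      simp only [Set.mem_preimage, Set.mem_setOf_eq]
      have : W ∩ WF c ((MeasurableEquiv.piFinSuccAbove (fun _ : Fin (m+1) => UnitI × Bool) 0).symm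
          (p, f)) = (W ∩ W1 c p.1) ∩ WF c f := by
        ext x
        simp [WF, Fin.forall_fin_succ, and_assoc, MeasurableEquiv.piFinSuccAbove]
      rw [this]
    rw [e1]
    have hmeasF : Measurable fun x => ENNReal.ofReal ((μ.real (W ∩ W1 c x) / ε) ^ (2 * N)) := by
      have hj : MeasurableSet {q : UnitI × UnitI | q.2 ∈ W ∩ W1 c q.1} :=
        (measurable_snd hW).inter (meas_joint hc)
      have := measurable_measure_prodMk_left (ν := μ) hj
      have h2 : Measurable fun x => μ.real (W ∩ W1 c x) := this.ennreal_toReal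
      fun_prop
    calc _ ≤ ∫⁻ p, ENNReal.ofReal ((1 - ε / 4) ^ m) *
            ENNReal.ofReal ((μ.real (W ∩ W1 c p.1) / ε) ^ (2 * N)) ∂D := by
          refine lintegral_mono fun p => ?_
          rw [← ENNReal.ofReal_mul (by positivity)]
          exact ih _ (hW.inter (meas_W1 hc _))
      _ = ENNReal.ofReal ((1 - ε / 4) ^ m) *
          ∫⁻ x, ENNReal.ofReal ((μ.real (W ∩ W1 c x) / ε) ^ (2 * N)) ∂μ := by
          have hcomp : Measurable fun p : UnitI × Bool =>
              ENNReal.ofReal ((μ.real (W ∩ W1 c p.1) / ε) ^ (2 * N)) := hmeasF.comp measurable_fst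
          rw [lintegral_const_mul _ hcomp]
          have := lintegral_map (μ := D) hmeasF (measurable_fst (α := UnitI) (β := Bool))
          rw [← hμ] at this
          rw [this]
      _ ≤ ENNReal.ofReal ((1 - ε / 4) ^ m) *
          ENNReal.ofReal ((1 - ε / 4) * (μ.real W / ε) ^ (2 * N)) := by
          gcongr
          exact step hc μ hN hcN hW hε hu
      _ = _ := by
          rw [← ENNReal.ofReal_mul (by positivity)]
          congr 1; ring

open Classical in
/-- the learner: copy the label of the nearest example on the left -/
noncomputable def learner (S : Multiset (UnitI × Bool)) (x : UnitI) : Bool :=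
  decide (∃ p ∈ S, p.2 = true ∧ p.1 ≤ x ∧ ∀ q ∈ S, q.1 ≤ x → q.1 ≤ p.1)

lemma learner_correct {c : UnitI → ℕ} (hc : Monotone c) {h : UnitI → Bool}
    (hh : ∀ x y, x ≤ y → c x = c y → h x = h y) (S : Multiset (UnitI × Bool))
    (hS : ∀ p ∈ S, p.2 = h p.1) (x : UnitI) (p : UnitI × Bool) (hp : p ∈ S)
    (hpx : p.1 ≤ x) (hcp : c p.1 = c x) : learner S x = h x := by
  classical
  have key : ∀ q ∈ S, q.1 ≤ x → p.1 ≤ q.1 → q.2 = h x := by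
    intro q hq hqx hpq
    rw [hS q hq]
    exact hh _ _ hqx (le_antisymm (hc hqx) (hcp ▸ hc hpq))
  obtain ⟨r, hr, hmax⟩ := Finset.exists_max_image (S.toFinset.filter fun q => q.1 ≤ x)
    (fun q => q.1) ⟨p, by simp [hp, hpx]⟩
  simp only [Finset.mem_filter, Multiset.mem_toFinset] at hr hmax
  have hmax' : ∀ q ∈ S, q.1 ≤ x → q.1 ≤ r.1 := fun q hq hqx => hmax q ⟨hq, hqx⟩
  cases hx : h x
  · unfold learner
    rw [decide_eq_false_iff_not]
    rintro ⟨q, hq, hq2, hqx, hqm⟩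
    have := key q hq hqx (hqm p hp hpx)
    rw [hx, hq2] at this
    exact absurd this (by simp)
  · unfold learner
    rw [decide_eq_true_iff]
    refine ⟨r, hr.1, ?_, hr.2, hmax'⟩
    rw [key r hr.1 hr.2 (hmax' p hp hpx), hx]

lemma cells_exist {k : ℕ} {h : UnitI → Bool} (hh : h ∈ Hunion k) :
    ∃ c : UnitI → ℕ, Monotone c ∧ (∀ x, c x < 2 * k + 1) ∧
      ∀ x y, x ≤ y → c x = c y → h x = h y := by
  classical
  obtain ⟨k', hk, a, b, -, hx⟩ := hh
  let P : UnitI → Finset (Fin k') := fun x => Finset.univ.filter fun i => a i < (x : ℝ)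
  let Q : UnitI → Finset (Fin k') := fun x => Finset.univ.filter fun i => b i ≤ (x : ℝ)
  have hP : ∀ x y, x ≤ y → P x ⊆ P y := by
    intro x y hxy i hi
    simp only [P, Finset.mem_filter, Finset.mem_univ, true_and] at hi ⊢
    exact hi.trans_le hxy
  have hQ : ∀ x y, x ≤ y → Q x ⊆ Q y := by
    intro x y hxy i hi
    simp only [Q, Finset.mem_filter, Finset.mem_univ, true_and] at hi ⊢
    exact hi.trans hxy
  refine ⟨fun x => (P x).card + (Q x).card, ?_, ?_, ?_⟩
  · intro x y hxy
    exact Nat.add_le_add (Finset.card_le_card (hP x y hxy)) (Finset.card_le_card (hQ x y hxy))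
  · intro x
    have h1 := Finset.card_le_univ (P x)
    have h2 := Finset.card_le_univ (Q x)
    simp only [Fintype.card_fin] at h1 h2
    show (P x).card + (Q x).card < _
    omega
  · intro x y hxy he
    have he : (P x).card + (Q x).card = (P y).card + (Q y).card := he
    have h1 := Finset.card_le_card (hP x y hxy)
    have h2 := Finset.card_le_card (hQ x y hxy)
    have e1 : P x = P y := Finset.eq_of_subset_of_card_le (hP x y hxy) (by omega)
    have e2 : Q x = Q y := Finset.eq_of_subset_of_card_le (hQ x y hxy) (by omega)
    rw [hx, hx]
    congr 1
    apply propext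
    refine exists_congr fun i => ?_
    have f1 : (i ∈ P x) ↔ (i ∈ P y) := by rw [e1]
    have f2 : (i ∈ Q x) ↔ (i ∈ Q y) := by rw [e2]
    simp only [P, Q, Finset.mem_filter, Finset.mem_univ, true_and] at f1 f2
    rw [f1, ← not_le (a := b i), f2, not_le]

lemma meas_h {k : ℕ} {h : UnitI → Bool} (hh : h ∈ Hunion k) : Measurable h := by
  obtain ⟨k', hk, a, b, -, hx⟩ := hh
  apply measurable_to_bool
  have : h ⁻¹' {true} = ⋃ i, {x : UnitI | a i < (x : ℝ) ∧ (x : ℝ) < b i} := by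
    ext x; simp [hx]
  rw [this]
  refine MeasurableSet.iUnion fun i => MeasurableSet.inter ?_ ?_
  · exact measurableSet_lt measurable_const measurable_subtype_coe
  · exact measurableSet_lt measurable_subtype_coe measurable_const

end Cells

open Cells in
/-- A single deterministic learner robustly learns unions of at most `k` intervals, for
every `k`, with `C (k log(1/ε) + log(1/δ))/ε` samples. -/
theorem stmt15 :
    ∃ C : ℝ, 0 < C ∧
    ∃ A : Multiset (UnitI × Bool) → UnitI → Bool,
      ∀ k : ℕ, 1 ≤ k →
      ∀ ε δ : ℝ, 0 < ε → ε < 1 → 0 < δ → δ < 1 →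
      ∀ hstar ∈ Hunion k, ∀ D : Measure (UnitI × Bool), IsProbabilityMeasure D →
        D {p : UnitI × Bool | p.2 = hstar p.1} = 1 →
        ∀ m : ℕ, C * (k * Real.log (1 / ε) + Real.log (1 / δ)) / ε ≤ (m : ℝ) →
          ENNReal.ofReal (1 - δ) ≤
            samples D m {f | atkDet D hstar (toTrain f) A ≤ ENNReal.ofReal ε} := by
  refine ⟨24, by norm_num, learner, ?_⟩
  intro k hk ε δ hε hε1 hδ hδ1 h hh D hD hDh m hm
  obtain ⟨c, hc, hcN, hconst⟩ := cells_exist hh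
  have hcm : Measurable c := hc.measurable
  have hhm := meas_h hh
  set μ := D.map Prod.fst with hμ
  haveI : IsProbabilityMeasure μ := Measure.isProbabilityMeasure_map measurable_fst.aemeasurable
  haveI : IsProbabilityMeasure (samples D m) := by unfold samples; infer_instance
  have hLm : MeasurableSet {p : UnitI × Bool | p.2 = h p.1} :=
    measurableSet_eq_fun measurable_snd (hhm.comp measurable_fst)
  have hae : ∀ᵐ p ∂D, p.2 = h p.1 := by
    rw [ae_iff]
    exact (prob_compl_eq_zero_iff hLm).2 hDh
  have haeS : ∀ᵐ f ∂(samples D m), ∀ i, (f i).2 = h (f i).1 := by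
    rw [ae_all_iff]
    intro i
    unfold samples
    exact (Measure.quasiMeasurePreserving_eval (μ := fun _ : Fin m => D) i).ae hae
  have hsub : ∀ f : Fin m → UnitI × Bool, (∀ i, (f i).2 = h (f i).1) →
      μ (Set.univ ∩ WF c f) ≤ ENNReal.ofReal ε →
      atkDet D h (toTrain f) learner ≤ ENNReal.ofReal ε := by
    intro f hf hμf
    refine iSup_le fun Adv => ?_
    refine le_trans ?_ hμf
    refine le_trans ?_ (Measure.le_map_apply measurable_fst.aemeasurable _)
    refine measure_mono ?_
    intro p hp
    refine ⟨trivial, ?_⟩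
    intro i hi
    apply hp
    refine learner_correct hc hconst _ ?_ p.1 (f i) ?_ hi.2 hi.1
    · intro q hq
      rcases Multiset.mem_add.1 hq with hq | hq
      · simp only [toTrain, Multiset.mem_coe, List.mem_ofFn] at hq
        obtain ⟨j, rfl⟩ := hq
        exact hf j
      · exact Adv.2 _ q hq
    · refine Multiset.mem_add.2 (Or.inl ?_)
      simp [toTrain, List.mem_ofFn]
  have hb := main_bound hcm D μ hμ (by omega : 1 ≤ 2 * k + 1) hcN hε hε1 m Set.univ
    MeasurableSet.univ
  have hEm := meas_event hcm μ MeasurableSet.univ m (ENNReal.ofReal ε)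
  have hnum : (1 - ε / 4) ^ m * (μ.real Set.univ / ε) ^ (2 * (2 * k + 1)) ≤ δ := by
    rw [probReal_univ]
    have hk1 : (1 : ℝ) ≤ k := by exact_mod_cast hk
    have hL : 0 < Real.log (1 / ε) := Real.log_pos (by rw [lt_div_iff₀ hε]; linarith)
    have hLd : 0 < Real.log (1 / δ) := Real.log_pos (by rw [lt_div_iff₀ hδ]; linarith)
    have a1 : (1 - ε / 4) ^ m ≤ Real.exp (-(m * (ε / 4))) := by
      have : 1 - ε / 4 ≤ Real.exp (-(ε / 4)) := by
        have := Real.add_one_le_exp (-(ε / 4)); linarith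
      calc _ ≤ Real.exp (-(ε / 4)) ^ m := pow_le_pow_left₀ (by linarith) this m
        _ = _ := by rw [← Real.exp_nat_mul]; congr 1; ring
    have a2 : (1 / ε) ^ (2 * (2 * k + 1)) = Real.exp ((4 * k + 2) * Real.log (1 / ε)) := by
      rw [← Real.exp_log (show 0 < 1 / ε by positivity), ← Real.exp_nat_mul, Real.log_exp]
      congr 1; push_cast; ring
    rw [a2]
    calc _ ≤ Real.exp (-(m * (ε / 4))) * Real.exp ((4 * k + 2) * Real.log (1 / ε)) := by gcongr
      _ = Real.exp (-(m * (ε / 4)) + (4 * k + 2) * Real.log (1 / ε)) := (Real.exp_add _ _).symm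
      _ ≤ Real.exp (-Real.log (1 / δ)) := by
        apply Real.exp_le_exp.2
        rw [div_le_iff₀ hε] at hm
        nlinarith
      _ = δ := by rw [one_div, Real.log_inv, neg_neg, Real.exp_log hδ]
  have hbad : samples D m {f | ENNReal.ofReal ε < μ (Set.univ ∩ WF c f)} ≤ ENNReal.ofReal δ :=
    hb.trans (ENNReal.ofReal_le_ofReal hnum)
  calc ENNReal.ofReal (1 - δ) = 1 - ENNReal.ofReal δ := by
        rw [ENNReal.ofReal_sub _ hδ.le, ENNReal.ofReal_one]
    _ ≤ 1 - samples D m {f | ENNReal.ofReal ε < μ (Set.univ ∩ WF c f)} :=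
        tsub_le_tsub_left hbad _
    _ = samples D m {f | ENNReal.ofReal ε < μ (Set.univ ∩ WF c f)}ᶜ :=
        (prob_compl_eq_one_sub hEm).symm
    _ ≤ _ := by
        refine measure_mono_ae ?_
        filter_upwards [haeS] with f hf hf2
        exact hsub f hf (not_lt.1 hf2)
end
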